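/- Let u ∈ C²(ℝⁿ) satisfy ℐu(x) = 0 for every x ∈ ℝⁿ, and assume that |u(x)| ≤ K(1 + |x|^κ) for all x ∈ ℝⁿ, for some K ≥ 0 and κ ∈ [0, 2s). Then u is an affine function, i.e. u(x) = ϖ · x + c for some ϖ ∈ ℝⁿ and c ∈ ℝ. If in addition κ < 1, then ϖ = 0 and u is constant. -/

import Mathlib

open MeasureTheory
open scoped RealInnerProductSpace

/-- The anisotropic integro-differential operator
`ℐu(x) = ∫_{S^{n-1} × ℝ} (u(x + rϑ) + u(x − rϑ) − 2u(x)) dμ(ϑ) dr / |r|^{1+2s}`. -/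
noncomputable def opI (n : ℕ) (s : ℝ)
    (μ : Measure (Metric.sphere (0 : EuclideanSpace ℝ (Fin n)) 1))
    (u : EuclideanSpace ℝ (Fin n) → ℝ) (x : EuclideanSpace ℝ (Fin n)) : ℝ :=
  ∫ p : Metric.sphere (0 : EuclideanSpace ℝ (Fin n)) 1 × ℝ,
    (u (x + p.2 • (p.1 : EuclideanSpace ℝ (Fin n))) +
      u (x - p.2 • (p.1 : EuclideanSpace ℝ (Fin n))) - 2 * u x) / |p.2| ^ (1 + 2 * s)
    ∂(μ.prod volume)

/-! Write `ν` for the Lévy measure and `v̂` for the Fourier transform of the complexification `v` of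
`u`. Split `ν = σ + τ`, where `σ` carries the jumps of size at most `R` and `τ` is finite; an atom
at the origin may be added to `τ` without changing the equation. With `T` the convolution by the
symmetrisation of `τ`, the equation becomes `A v̂ = (T v)^`, where `A = 2 |τ| + a` and `a` is the
symbol of `σ`, a smooth function. Hence `v̂ = A⁻ᴺ (Tᴺ v)^` for every `N`. In a suitable weight
`Tᴺ v` grows at most like `(2 |τ| + ε)ᴺ`, whereas `A ≥ 2 |τ| + 2 ε` on a given compact set away from
the origin, once `R` is large. So `v̂` is supported at the origin, and `v` is reproduced by
averaging against a Schwartz function at every scale `r`. Letting `r → ∞`, its second differences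
are `O(r ^ (κ - 2))`, hence zero. -/

section

open Filter Topology
open scoped FourierTransform SchwartzMap ContDiff

section Growth

variable {V : Type*} [NormedAddCommGroup V]

lemma one_add_mul_norm_add_rpow_le {δ κ : ℝ} (hδ : 0 ≤ δ) (hκ : 0 ≤ κ) (x y : V) :
    (1 + δ * ‖x + y‖) ^ κ ≤ (1 + δ * ‖x‖) ^ κ * (1 + δ * ‖y‖) ^ κ := by
  rw [← Real.mul_rpow (by positivity) (by positivity)]
  refine Real.rpow_le_rpow (by positivity) ?_ hκ
  have h : 0 ≤ (δ * ‖x‖) * (δ * ‖y‖) := by positivity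
  nlinarith [mul_le_mul_of_nonneg_left (norm_add_le x y) hδ]

lemma one_add_mul_norm_sub_rpow_le {δ κ : ℝ} (hδ : 0 ≤ δ) (hκ : 0 ≤ κ) (x y : V) :
    (1 + δ * ‖x - y‖) ^ κ ≤ (1 + δ * ‖x‖) ^ κ * (1 + δ * ‖y‖) ^ κ := by
  simpa [sub_eq_add_neg] using one_add_mul_norm_add_rpow_le hδ hκ x (-y)

lemma one_add_norm_sub_rpow_le {κ : ℝ} (hκ : 0 ≤ κ) (x y : V) :
    (1 + ‖x - y‖) ^ κ ≤ (1 + ‖x‖) ^ κ * (1 + ‖y‖) ^ κ := by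
  simpa using one_add_mul_norm_sub_rpow_le zero_le_one hκ x y

lemma norm_add_add_sub_le {δ κ C : ℝ} {v : V → ℂ} (hδ : 0 ≤ δ) (hκ : 0 ≤ κ)
    (hv : ∀ x, ‖v x‖ ≤ C * (1 + δ * ‖x‖) ^ κ) (x y : V) :
    ‖v (x + y) + v (x - y)‖ ≤ C * (1 + δ * ‖x‖) ^ κ * (2 * (1 + δ * ‖y‖) ^ κ) := by
  have hC : 0 ≤ C := by simpa using (norm_nonneg _).trans (hv 0)
  calc ‖v (x + y) + v (x - y)‖
      ≤ C * (1 + δ * ‖x + y‖) ^ κ + C * (1 + δ * ‖x - y‖) ^ κ :=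
        (norm_add_le _ _).trans (add_le_add (hv _) (hv _))
    _ ≤ C * ((1 + δ * ‖x‖) ^ κ * (1 + δ * ‖y‖) ^ κ) +
        C * ((1 + δ * ‖x‖) ^ κ * (1 + δ * ‖y‖) ^ κ) := by
      gcongr
      · exact one_add_mul_norm_add_rpow_le hδ hκ x y
      · exact one_add_mul_norm_sub_rpow_le hδ hκ x y
    _ = _ := by ring

lemma norm_comp_sub_mul_le {κ C : ℝ} {v : V → ℂ} (hκ : 0 ≤ κ) (hv : ∀ x, ‖v x‖ ≤ C * (1 + ‖x‖) ^ κ)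
    (x z : V) (a : ℂ) :
    ‖v (x - z) * a‖ ≤ C * (1 + ‖x‖) ^ κ * ((1 + ‖z‖) ^ κ * ‖a‖) := by
  have hC : 0 ≤ C := by simpa using (norm_nonneg _).trans (hv 0)
  calc ‖v (x - z) * a‖ ≤ C * (1 + ‖x - z‖) ^ κ * ‖a‖ := by
        rw [norm_mul]
        gcongr
        exact hv _
    _ ≤ C * ((1 + ‖x‖) ^ κ * (1 + ‖z‖) ^ κ) * ‖a‖ := by
        gcongr
        exact one_add_norm_sub_rpow_le hκ x z
    _ = _ := by ring

variable [MeasurableSpace V]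

/-- Measurable functions growing at most like `‖x‖ ^ κ` at infinity. -/
structure HasPowerGrowth (κ : ℝ) (v : V → ℂ) : Prop where
  measurable : Measurable v
  exists_bound : ∃ C, ∀ x, ‖v x‖ ≤ C * (1 + ‖x‖) ^ κ

/-- The symmetric second difference of `v` at `x` with step `y`. -/
def secondDiff {R : Type*} [Ring R] (v : V → R) (y x : V) : R :=
  v (x + y) + v (x - y) - 2 * v x

/-- The Lévy operator `v ↦ ∫ (v (x + y) + v (x - y) - 2 v x) dν(y)`. -/
noncomputable def levyOp {R : Type*} [NormedRing R] [NormedSpace ℝ R] (ν : Measure V)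
    (v : V → R) (x : V) : R :=
  ∫ y, secondDiff v y x ∂ν

/-- The convolution of `v` with the symmetrised measure `τ(dy) + τ(-dy)`. -/
noncomputable def symmConv (τ : Measure V) (v : V → ℂ) (x : V) : ℂ :=
  ∫ y, (v (x + y) + v (x - y)) ∂τ

lemma HasPowerGrowth.exists_nonneg_bound {κ : ℝ} {v : V → ℂ} (hv : HasPowerGrowth κ v) :
    ∃ C, 0 ≤ C ∧ ∀ x, ‖v x‖ ≤ C * (1 + ‖x‖) ^ κ := by
  obtain ⟨C, hC⟩ := hv.exists_bound
  exact ⟨C, by simpa using (norm_nonneg _).trans (hC 0), hC⟩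

lemma norm_symmConv_le {δ κ C : ℝ} {τ : Measure V} {v : V → ℂ} (hδ : 0 ≤ δ) (hκ : 0 ≤ κ)
    (hτ : Integrable (fun y ↦ (1 + δ * ‖y‖) ^ κ) τ)
    (hv : ∀ x, ‖v x‖ ≤ C * (1 + δ * ‖x‖) ^ κ) (x : V) :
    ‖symmConv τ v x‖ ≤ C * (2 * ∫ y, (1 + δ * ‖y‖) ^ κ ∂τ) * (1 + δ * ‖x‖) ^ κ := by
  refine (norm_integral_le_of_norm_le ((hτ.const_mul 2).const_mul _)
    (ae_of_all _ fun y ↦ norm_add_add_sub_le hδ hκ hv x y)).trans_eq ?_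
  rw [integral_const_mul, integral_const_mul]
  ring

variable {τ ρ : Measure V} {κ : ℝ} {v w φ : V → ℂ}

lemma HasPowerGrowth.const_mul (hv : HasPowerGrowth κ v) (c : ℂ) :
    HasPowerGrowth κ fun x ↦ c * v x := by
  obtain ⟨C, hC⟩ := hv.exists_bound
  refine ⟨hv.measurable.const_mul c, ‖c‖ * C, fun x ↦ ?_⟩
  rw [norm_mul, mul_assoc]
  exact mul_le_mul_of_nonneg_left (hC x) (norm_nonneg c)

lemma HasPowerGrowth.sub (hv : HasPowerGrowth κ v) (hw : HasPowerGrowth κ w) :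
    HasPowerGrowth κ fun x ↦ v x - w x := by
  obtain ⟨C, hC⟩ := hv.exists_bound
  obtain ⟨D, hD⟩ := hw.exists_bound
  refine ⟨hv.measurable.sub hw.measurable, C + D, fun x ↦ ?_⟩
  rw [add_mul]
  exact (norm_sub_le _ _).trans (add_le_add (hC x) (hD x))

variable [BorelSpace V]

lemma HasPowerGrowth.integrable_add_add_sub (hv : HasPowerGrowth κ v) (hκ : 0 ≤ κ)
    (hτ : Integrable (fun y ↦ (1 + ‖y‖) ^ κ) τ) (x : V) :
    Integrable (fun y ↦ v (x + y) + v (x - y)) τ := by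
  obtain ⟨C, hC⟩ := hv.exists_bound
  have hm := hv.measurable
  refine Integrable.mono' ((hτ.const_mul 2).const_mul (C * (1 + ‖x‖) ^ κ))
    (by fun_prop) (ae_of_all _ fun y ↦ ?_)
  simpa using norm_add_add_sub_le (δ := 1) zero_le_one hκ (by simpa using hC) x y

lemma integrable_one_add_mul_norm_rpow {δ : ℝ} (hδ : 0 ≤ δ) (hδ1 : δ ≤ 1) (hκ : 0 ≤ κ)
    (hτ : Integrable (fun y : V ↦ (1 + ‖y‖) ^ κ) τ) :
    Integrable (fun y : V ↦ (1 + δ * ‖y‖) ^ κ) τ := by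
  refine Integrable.mono' hτ (Measurable.aestronglyMeasurable (by fun_prop))
    (ae_of_all _ fun y ↦ ?_)
  rw [Real.norm_of_nonneg (by positivity)]
  gcongr
  exact mul_le_of_le_one_left (norm_nonneg y) hδ1

lemma tendsto_integral_one_add_mul_norm_rpow (hκ : 0 ≤ κ)
    (hτ : Integrable (fun y : V ↦ (1 + ‖y‖) ^ κ) τ) :
    Tendsto (fun δ : ℝ ↦ ∫ y : V, (1 + δ * ‖y‖) ^ κ ∂τ) (𝓝[>] 0) (𝓝 (τ.real Set.univ)) := by
  have hτ1 : ∫ _ : V, (1 : ℝ) ∂τ = τ.real Set.univ := by simp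
  rw [← hτ1]
  refine tendsto_integral_filter_of_dominated_convergence (fun y ↦ (1 + ‖y‖) ^ κ)
    (.of_forall fun δ ↦ Measurable.aestronglyMeasurable (by fun_prop)) ?_ hτ
    (ae_of_all _ fun y ↦ ?_)
  · filter_upwards [Ioc_mem_nhdsGT zero_lt_one] with δ hδ
    refine ae_of_all _ fun y ↦ ?_
    have := hδ.1.le
    rw [Real.norm_of_nonneg (by positivity)]
    gcongr
    exact mul_le_of_le_one_left (norm_nonneg y) hδ.2
  · have h : ContinuousAt (fun δ : ℝ ↦ (1 + δ * ‖y‖) ^ κ) 0 :=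
      ContinuousAt.rpow_const (by fun_prop) (Or.inl (by simp))
    simpa using h.tendsto.mono_left nhdsWithin_le_nhds

lemma HasPowerGrowth.integrable_sub_mul (hv : HasPowerGrowth κ v) (hκ : 0 ≤ κ)
    (hφm : AEStronglyMeasurable φ ρ) (hφ : Integrable (fun z ↦ (1 + ‖z‖) ^ κ * ‖φ z‖) ρ) (x : V) :
    Integrable (fun z ↦ v (x - z) * φ z) ρ := by
  obtain ⟨C, hC⟩ := hv.exists_bound
  have hm := hv.measurable
  exact (hφ.const_mul (C * (1 + ‖x‖) ^ κ)).mono'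
    (Measurable.aestronglyMeasurable (by fun_prop) |>.mul hφm)
    (ae_of_all _ fun z ↦ norm_comp_sub_mul_le hκ hC x z _)

/-- The weights `(1 + δ‖x‖) ^ κ` with `δ` small bring the growth factor of `symmConv τ` arbitrarily
close to `2 τ(V)`. -/
lemma HasPowerGrowth.exists_norm_iterate_symmConv_le (hv : HasPowerGrowth κ v) (hκ : 0 ≤ κ)
    (hτ : Integrable (fun y : V ↦ (1 + ‖y‖) ^ κ) τ) {M : ℝ} (hM : 2 * τ.real Set.univ < M) :
    ∃ C, ∀ (N : ℕ) x, ‖(symmConv τ)^[N] v x‖ ≤ C * M ^ N * (1 + ‖x‖) ^ κ := by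
  obtain ⟨δ, hlt, hδ, hδ1⟩ := (((tendsto_integral_one_add_mul_norm_rpow hκ hτ).const_mul
    2).eventually_lt_const hM |>.and (Ioc_mem_nhdsGT zero_lt_one)).exists
  obtain ⟨C, hC0, hC⟩ := hv.exists_nonneg_bound
  have hM0 : 0 ≤ M := (by positivity : 0 ≤ 2 * τ.real Set.univ).trans hM.le
  have hδ' (x : V) : (1 + ‖x‖) ^ κ ≤ (1 / δ) ^ κ * (1 + δ * ‖x‖) ^ κ := by
    rw [← Real.mul_rpow (by positivity) (by positivity)]
    gcongr
    rw [mul_add, ← mul_assoc, one_div_mul_cancel hδ.ne', mul_one, one_mul]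
    gcongr
    exact (one_le_div hδ).2 hδ1
  have hweighted (N : ℕ) : ∀ x, ‖(symmConv τ)^[N] v x‖ ≤
      C * (1 / δ) ^ κ * M ^ N * (1 + δ * ‖x‖) ^ κ := by
    induction N with
    | zero =>
      intro x
      rw [pow_zero, mul_one, mul_assoc]
      exact (hC x).trans (mul_le_mul_of_nonneg_left (hδ' x) hC0)
    | succ N ih =>
      intro x
      rw [Function.iterate_succ_apply', pow_succ, ← mul_assoc]
      refine (norm_symmConv_le hδ.le hκ
        (integrable_one_add_mul_norm_rpow hδ.le hδ1 hκ hτ) ih x).trans ?_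
      gcongr
  refine ⟨C * (1 / δ) ^ κ, fun N x ↦ (hweighted N x).trans ?_⟩
  gcongr
  exact mul_le_of_le_one_left (norm_nonneg x) hδ1

variable [SecondCountableTopology V]

lemma measurable_secondDiff (hv : Measurable v) :
    Measurable fun p : V × V ↦ secondDiff v p.1 p.2 := by
  unfold secondDiff
  fun_prop

lemma measurable_symmConv [SFinite τ] (hv : Measurable v) : Measurable (symmConv τ v) :=
  (StronglyMeasurable.integral_prod_right (f := fun x y ↦ v (x + y) + v (x - y))
    (Measurable.stronglyMeasurable (by fun_prop))).measurable

lemma hasPowerGrowth_symmConv [SFinite τ] (hv : HasPowerGrowth κ v) (hκ : 0 ≤ κ)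
    (hτ : Integrable (fun y ↦ (1 + ‖y‖) ^ κ) τ) : HasPowerGrowth κ (symmConv τ v) := by
  obtain ⟨C, hC⟩ := hv.exists_bound
  refine ⟨measurable_symmConv hv.measurable, C * (2 * ∫ y, (1 + ‖y‖) ^ κ ∂τ), fun x ↦ ?_⟩
  simpa using norm_symmConv_le (δ := 1) zero_le_one hκ (by simpa using hτ) (by simpa using hC) x

lemma hasPowerGrowth_iterate_symmConv [SFinite τ] (hv : HasPowerGrowth κ v) (hκ : 0 ≤ κ)
    (hτ : Integrable (fun y ↦ (1 + ‖y‖) ^ κ) τ) (N : ℕ) :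
    HasPowerGrowth κ ((symmConv τ)^[N] v) := by
  induction N with
  | zero => exact hv
  | succ N ih =>
    rw [Function.iterate_succ_apply']
    exact hasPowerGrowth_symmConv ih hκ hτ

lemma HasPowerGrowth.symmConv_integral_sub_mul [SFinite τ] [SFinite ρ] (hv : HasPowerGrowth κ v)
    (hκ : 0 ≤ κ) (hτ : Integrable (fun y ↦ (1 + ‖y‖) ^ κ) τ) (hφm : AEStronglyMeasurable φ ρ)
    (hφ : Integrable (fun z ↦ (1 + ‖z‖) ^ κ * ‖φ z‖) ρ) (x : V) :
    symmConv τ (fun x ↦ ∫ z, v (x - z) * φ z ∂ρ) x =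
      ∫ z, symmConv τ v (x - z) * φ z ∂ρ := by
  have hint : Integrable
      (fun p : V × V ↦ (v (x - p.2 + p.1) + v (x - p.2 - p.1)) * φ p.2) (τ.prod ρ) := by
    obtain ⟨C, hC⟩ := hv.exists_bound
    have hm := hv.measurable
    refine Integrable.mono' ((hτ.mul_prod hφ).const_mul (C * (1 + ‖x‖) ^ κ * 2))
      (Measurable.aestronglyMeasurable (by fun_prop) |>.mul hφm.comp_snd)
      (ae_of_all _ fun p ↦ ?_)
    have hsum (w : V) : ‖v (w + p.1) + v (w - p.1)‖ ≤
        C * (2 * (1 + ‖p.1‖) ^ κ) * (1 + ‖w‖) ^ κ := by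
      refine (norm_add_add_sub_le (δ := 1) zero_le_one hκ (by simpa using hC) w p.1).trans_eq ?_
      rw [one_mul, one_mul]
      ring
    exact (norm_comp_sub_mul_le (v := fun w ↦ v (w + p.1) + v (w - p.1)) hκ hsum x p.2
      (φ p.2)).trans_eq (by ring)
  have hi := hv.integrable_sub_mul hκ hφm hφ
  simp_rw [symmConv, ← integral_mul_const]
  rw [← integral_integral_swap hint]
  refine integral_congr_ae (ae_of_all _ fun y ↦ ?_)
  simp only [← integral_add (hi _) (hi _)]
  refine integral_congr_ae (ae_of_all _ fun z ↦ ?_)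
  simp only [add_sub_right_comm, sub_right_comm x, add_mul]

end Growth

section Taylor

variable {V : Type*} [NormedAddCommGroup V] [NormedSpace ℝ V]

lemma norm_fderiv_fderiv {f : V → ℂ} (z : V) :
    ‖fderiv ℝ (fderiv ℝ f) z‖ = ‖iteratedFDeriv ℝ 2 f z‖ := by
  rw [← norm_iteratedFDeriv_one, norm_iteratedFDeriv_fderiv]

lemma norm_fderiv_add_sub_fderiv_le {f : V → ℂ} (hf : ContDiff ℝ 2 f) {x y w : V} {M : ℝ}
    (hM : ∀ z ∈ Metric.closedBall x ‖y‖, ‖iteratedFDeriv ℝ 2 f z‖ ≤ M)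
    (hw : w ∈ segment ℝ (x - y) x) : ‖fderiv ℝ f (w + y) - fderiv ℝ f w‖ ≤ M * ‖y‖ := by
  have hf' : ContDiff ℝ 1 (fderiv ℝ f) := hf.fderiv_right (by norm_num)
  have hxy : x - y ∈ Metric.closedBall x ‖y‖ := by simp
  have hw1 : w ∈ Metric.closedBall x ‖y‖ :=
    (convex_closedBall x ‖y‖).segment_subset hxy (Metric.mem_closedBall_self (norm_nonneg y)) hw
  have hw2 : w + y ∈ Metric.closedBall x ‖y‖ := by
    obtain ⟨a, b, ha, hb, hab, rfl⟩ := hw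
    have : a • (x - y) + b • x + y = x + b • y := by
      rw [← eq_sub_iff_add_eq] at hab
      subst hab
      module
    rw [this, Metric.mem_closedBall, dist_eq_norm, add_sub_cancel_left, norm_smul,
      Real.norm_of_nonneg hb]
    exact mul_le_of_le_one_left (norm_nonneg y) (by linarith)
  have := (convex_closedBall x ‖y‖).norm_image_sub_le_of_norm_fderiv_le (𝕜 := ℝ)
    (fun z _ ↦ hf'.differentiable (by norm_num) z)
    (fun z hz ↦ (norm_fderiv_fderiv z).trans_le (hM z hz)) hw1 hw2
  simpa using this

lemma norm_secondDiff_le_of_contDiff {f : V → ℂ} (hf : ContDiff ℝ 2 f) {x y : V} {M : ℝ}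
    (hM : ∀ z ∈ Metric.closedBall x ‖y‖, ‖iteratedFDeriv ℝ 2 f z‖ ≤ M) :
    ‖secondDiff f y x‖ ≤ M * ‖y‖ ^ 2 := by
  have hd : Differentiable ℝ f := hf.differentiable (by norm_num)
  have hG : ∀ w ∈ segment ℝ (x - y) x,
      HasFDerivWithinAt (fun w ↦ f (w + y) - f w) (fderiv ℝ f (w + y) - fderiv ℝ f w)
        (segment ℝ (x - y) x) w := fun w _ ↦
    (((hasFDerivAt_comp_add_right y).2 (hd (w + y)).hasFDerivAt).sub
      (hd w).hasFDerivAt).hasFDerivWithinAt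
  have h := (convex_segment (x - y) x).norm_image_sub_le_of_norm_hasFDerivWithin_le hG
    (fun w hw ↦ norm_fderiv_add_sub_fderiv_le hf hM hw)
    (left_mem_segment ℝ _ _) (right_mem_segment ℝ _ _)
  calc ‖secondDiff f y x‖ = ‖f (x + y) - f x - (f (x - y + y) - f (x - y))‖ := by
        rw [secondDiff, sub_add_cancel]
        congr 1
        ring
    _ ≤ M * ‖y‖ * ‖x - (x - y)‖ := h
    _ = M * ‖y‖ ^ 2 := by rw [sub_sub_cancel]; ring

lemma norm_secondDiff_le_of_norm_iteratedFDeriv_le {f : V → ℂ} (hf : ContDiff ℝ 2 f)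
    {C R : ℝ} {k : ℕ} (hC : ∀ x, ‖iteratedFDeriv ℝ 2 f x‖ ≤ C * ((1 + ‖x‖) ^ k)⁻¹)
    {y : V} (hy : ‖y‖ ≤ R) (x : V) :
    ‖secondDiff f y x‖ ≤ C * (1 + R) ^ k * (‖y‖ ^ 2 * ((1 + ‖x‖) ^ k)⁻¹) := by
  have hC0 : 0 ≤ C := by simpa using (norm_nonneg _).trans (hC 0)
  have hR : 0 ≤ R := (norm_nonneg y).trans hy
  refine (norm_secondDiff_le_of_contDiff (M := C * ((1 + R) ^ k * ((1 + ‖x‖) ^ k)⁻¹))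
    hf fun z hz ↦ (hC z).trans ?_).trans_eq (by ring)
  gcongr
  rw [← div_eq_mul_inv, le_div_iff₀ (by positivity), inv_mul_le_iff₀ (by positivity), ← mul_pow]
  gcongr
  rw [Metric.mem_closedBall, dist_eq_norm, norm_sub_rev] at hz
  have hxz : ‖x‖ ≤ ‖z‖ + R := (norm_le_norm_add_norm_sub' x z).trans (by linarith)
  nlinarith [mul_nonneg (norm_nonneg z) hR]

lemma norm_sub_mul_secondDiff_le {v f : V → ℂ} {κ A B R : ℝ} {k : ℕ} (hκ : 0 ≤ κ)
    (hv : ∀ x, ‖v x‖ ≤ A * (1 + ‖x‖) ^ κ) (hf : ContDiff ℝ 2 f)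
    (hB : ∀ x, ‖iteratedFDeriv ℝ 2 f x‖ ≤ B * ((1 + ‖x‖) ^ k)⁻¹) {y : V} (hy : ‖y‖ ≤ R) (x z : V) :
    ‖v (x - z) * secondDiff f y z‖ ≤ A * (1 + ‖x‖) ^ κ * (B * (1 + R) ^ k) *
      (‖y‖ ^ 2 * ((1 + ‖z‖) ^ κ * ((1 + ‖z‖) ^ k)⁻¹)) := by
  have hA : 0 ≤ A := by simpa using (norm_nonneg _).trans (hv 0)
  refine (norm_comp_sub_mul_le hκ hv x z _).trans ?_
  calc _ ≤ A * (1 + ‖x‖) ^ κ * ((1 + ‖z‖) ^ κ *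
        (B * (1 + R) ^ k * (‖y‖ ^ 2 * ((1 + ‖z‖) ^ k)⁻¹))) := by
        gcongr
        exact norm_secondDiff_le_of_norm_iteratedFDeriv_le hf hB hy z
    _ = _ := by ring

lemma exists_norm_iteratedFDeriv_schwartz_le (ψ : 𝓢(V, ℂ)) (k n : ℕ) :
    ∃ C, 0 ≤ C ∧ ∀ x, ‖iteratedFDeriv ℝ n ψ x‖ ≤ C * ((1 + ‖x‖) ^ k)⁻¹ := by
  refine ⟨2 ^ k * ((Finset.Iic (k, n)).sup fun m ↦ SchwartzMap.seminorm ℝ m.1 m.2) ψ,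
    by positivity, fun x ↦ ?_⟩
  rw [← div_eq_mul_inv, le_div_iff₀ (by positivity), mul_comm]
  exact SchwartzMap.one_add_le_sup_seminorm_apply (𝕜 := ℝ) (m := (k, n)) le_rfl le_rfl ψ x

end Taylor

section Cutoff

variable {V : Type*} [NormedAddCommGroup V] [InnerProductSpace ℝ V] [FiniteDimensional ℝ V]

variable (V) in
/-- Dilates of a single bump function. -/
lemma exists_cutoff_sequence : ∃ χ : ℕ → V → ℂ, (∀ N, ContDiff ℝ ∞ (χ N)) ∧
    (∀ N, HasCompactSupport (χ N)) ∧ (∀ z, ∀ᶠ N in atTop, χ N z = 1) ∧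
    ∀ n, ∃ C, ∀ N z, ‖iteratedFDeriv ℝ n (χ N) z‖ ≤ C := by
  obtain ⟨b⟩ : Nonempty (ContDiffBump (0 : V)) := inferInstance
  have hb : ContDiff ℝ ∞ fun z ↦ (b z : ℂ) := Complex.ofRealCLM.contDiff.comp b.contDiff
  have hbc : HasCompactSupport fun z ↦ (b z : ℂ) :=
    b.hasCompactSupport.comp_left Complex.ofReal_zero
  have hc (N : ℕ) : 0 < 1 / ((N : ℝ) + 1) := by positivity
  refine ⟨fun N z ↦ b ((1 / ((N : ℝ) + 1)) • z), fun N ↦ hb.comp (contDiff_const_smul _),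
    fun N ↦ hbc.comp_smul (hc N).ne', fun z ↦ ?_, fun n ↦ ?_⟩
  · have hlim : Tendsto (fun N : ℕ ↦ (1 / ((N : ℝ) + 1)) • z) atTop (𝓝 0) := by
      simpa using (tendsto_one_div_add_atTop_nhds_zero_nat (𝕜 := ℝ)).smul_const z
    filter_upwards [hlim.eventually (b.eventuallyEq_one)] with N hN
    simp only [hN, Pi.one_apply, Complex.ofReal_one]
  · obtain ⟨C, hC⟩ := (hbc.iteratedFDeriv n).exists_bound_of_continuous
      (hb.continuous_iteratedFDeriv (m := n) (mod_cast le_top))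
    refine ⟨C, fun N z ↦ ?_⟩
    rw [iteratedFDeriv_comp_const_smul (i := n) _ (hb.of_le (mod_cast le_top)), norm_smul, norm_pow,
      Real.norm_of_nonneg (hc N).le]
    refine (mul_le_of_le_one_left (norm_nonneg _) (pow_le_one₀ (hc N).le ?_)).trans (hC _)
    exact (div_le_one (by positivity)).2 (by simp)

lemma exists_hasCompactSupport_approx_schwartz (ψ : 𝓢(V, ℂ)) :
    ∃ Ψ : ℕ → 𝓢(V, ℂ), (∀ N, HasCompactSupport (Ψ N)) ∧ (∀ z, ∀ᶠ N in atTop, Ψ N z = ψ z) ∧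
      ∀ k n, ∃ C, ∀ N z, ‖iteratedFDeriv ℝ n (Ψ N) z‖ ≤ C * ((1 + ‖z‖) ^ k)⁻¹ := by
  obtain ⟨χ, hχ, hχc, hχ1, hχb⟩ := exists_cutoff_sequence V
  have hc (N : ℕ) : HasCompactSupport fun z ↦ χ N z * ψ z := (hχc N).mul_right
  have hs (N : ℕ) : ContDiff ℝ ∞ fun z ↦ χ N z * ψ z := (hχ N).mul (ψ.smooth ⊤)
  refine ⟨fun N ↦ (hc N).toSchwartzMap (hs N), fun N ↦ hc N, fun z ↦ ?_, fun k n ↦ ?_⟩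
  · filter_upwards [hχ1 z] with N hN
    change χ N z * ψ z = ψ z
    rw [hN, one_mul]
  · choose A hA using hχb
    choose B _ hB using exists_norm_iteratedFDeriv_schwartz_le ψ k
    refine ⟨∑ i ∈ Finset.range (n + 1), n.choose i * A i * B (n - i), fun N z ↦ ?_⟩
    change ‖iteratedFDeriv ℝ n (fun z ↦ χ N z * ψ z) z‖ ≤ _
    refine (norm_iteratedFDeriv_mul_le (hχ N) (ψ.smooth ⊤) z (mod_cast le_top)).trans ?_
    rw [Finset.sum_mul]
    refine Finset.sum_le_sum fun i _ ↦ ?_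
    have hA0 : 0 ≤ A i := (norm_nonneg _).trans (hA i N z)
    rw [mul_assoc, mul_assoc, mul_assoc]
    gcongr
    · exact hA i N z
    · exact hB (n - i) z

end Cutoff

section Symmetry

variable {V : Type*} [NormedAddCommGroup V] [InnerProductSpace ℝ V] [FiniteDimensional ℝ V]
  [MeasurableSpace V] [BorelSpace V] {σ : Measure V} {κ R : ℝ} {v : V → ℂ}

variable (V) in
lemma exists_integrable_rpow_mul_inv_pow (κ : ℝ) :
    ∃ k : ℕ, Integrable (fun z : V ↦ (1 + ‖z‖) ^ κ * ((1 + ‖z‖) ^ k)⁻¹) := by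
  obtain ⟨k, hk⟩ := exists_nat_gt (Module.finrank ℝ V + κ)
  refine ⟨k, (integrable_one_add_norm (μ := volume) (E := V) (r := k - κ) (by linarith)).congr
    (ae_of_all _ fun z ↦ ?_)⟩
  have : 0 < 1 + ‖z‖ := by positivity
  simp only [neg_sub, Real.rpow_sub this, Real.rpow_natCast, div_eq_mul_inv]

lemma integrable_rpow_mul_norm_schwartz (ψ : 𝓢(V, ℂ)) (κ : ℝ) :
    Integrable (fun z ↦ (1 + ‖z‖) ^ κ * ‖ψ z‖) := by
  obtain ⟨k, hk⟩ := exists_integrable_rpow_mul_inv_pow V κ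
  obtain ⟨C, -, hC⟩ := exists_norm_iteratedFDeriv_schwartz_le ψ k 0
  have hψ := ψ.continuous.measurable
  refine Integrable.mono' (hk.const_mul C) (Measurable.aestronglyMeasurable (by fun_prop))
    (ae_of_all _ fun z ↦ ?_)
  rw [Real.norm_of_nonneg (by positivity), mul_left_comm]
  gcongr
  simpa using hC z

lemma HasPowerGrowth.integrable_sub_mul_schwartz (hv : HasPowerGrowth κ v) (hκ : 0 ≤ κ)
    (ψ : 𝓢(V, ℂ)) (x : V) : Integrable (fun z ↦ v (x - z) * ψ z) :=
  hv.integrable_sub_mul hκ ψ.continuous.aestronglyMeasurable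
    (integrable_rpow_mul_norm_schwartz ψ κ) x

lemma integral_sub_mul_secondDiff {φ : V → ℂ} (h : ∀ x, Integrable fun z ↦ v (x - z) * φ z)
    (y x : V) : ∫ z, v (x - z) * secondDiff φ y z = ∫ z, secondDiff v y (x - z) * φ z := by
  have htranslate (a : V) : ∫ z, v (x - z) * φ (z + a) = ∫ z, v (x + a - z) * φ z := by
    rw [← integral_add_right_eq_self (fun z ↦ v (x + a - z) * φ z) a]
    simp only [add_sub_add_right_eq_sub]
  have hi (a : V) : Integrable fun z ↦ v (x - z) * φ (z + a) := by
    simpa only [add_sub_add_right_eq_sub] using (h (x + a)).comp_add_right a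
  calc ∫ z, v (x - z) * secondDiff φ y z
      = ∫ z, (v (x - z) * φ (z + y) + v (x - z) * φ (z + -y) - 2 * (v (x - z) * φ z)) := by
        refine integral_congr_ae (ae_of_all _ fun z ↦ ?_)
        simp only [secondDiff, ← sub_eq_add_neg]
        ring
    _ = ∫ z, (v (x + y - z) * φ z + v (x + -y - z) * φ z - 2 * (v (x - z) * φ z)) := by
        rw [integral_sub _ ((h x).const_mul 2), integral_sub _ ((h x).const_mul 2),
          integral_add (hi _) (hi _), integral_add (h _) (h _), htranslate, htranslate]
        exacts [(h _).add (h _), (hi _).add (hi _)]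
    _ = ∫ z, secondDiff v y (x - z) * φ z := by
        refine integral_congr_ae (ae_of_all _ fun z ↦ ?_)
        simp only [secondDiff, add_sub_right_comm, ← sub_eq_add_neg]
        rw [sub_right_comm x y z]
        ring

lemma measurable_sub_mul_secondDiff {f : V → ℂ} (hv : Measurable v) (hf : Measurable f) (x : V) :
    Measurable fun p : V × V ↦ v (x - p.2) * secondDiff f p.1 p.2 := by
  have := measurable_secondDiff hf
  fun_prop

lemma HasPowerGrowth.integrable_prod_sub_mul_secondDiff (hv : HasPowerGrowth κ v) (hκ : 0 ≤ κ)
    (hσ : Integrable (fun y ↦ ‖y‖ ^ 2) σ) (hσR : ∀ᵐ y ∂σ, ‖y‖ ≤ R) (ψ : 𝓢(V, ℂ)) (x : V) :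
    Integrable (fun p : V × V ↦ v (x - p.2) * secondDiff ψ p.1 p.2) (σ.prod volume) := by
  obtain ⟨A, hA⟩ := hv.exists_bound
  obtain ⟨k, hk⟩ := exists_integrable_rpow_mul_inv_pow V κ
  obtain ⟨B, -, hB⟩ := exists_norm_iteratedFDeriv_schwartz_le ψ k 2
  refine Integrable.mono' ((hσ.mul_prod hk).const_mul (A * (1 + ‖x‖) ^ κ * (B * (1 + R) ^ k)))
    (measurable_sub_mul_secondDiff hv.measurable ψ.continuous.measurable x).aestronglyMeasurable ?_
  filter_upwards [Measure.quasiMeasurePreserving_fst.ae hσR] with p hp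
  exact norm_sub_mul_secondDiff_le hκ hA (ψ.smooth 2) hB hp x p.2

lemma integrable_prod_secondDiff_sub_mul (hv : ContDiff ℝ 2 v)
    (hσ : Integrable (fun y ↦ ‖y‖ ^ 2) σ) (hσR : ∀ᵐ y ∂σ, ‖y‖ ≤ R) {φ : V → ℂ}
    (hφ : Continuous φ) (hφc : HasCompactSupport φ) (x : V) :
    Integrable (fun p : V × V ↦ secondDiff v p.1 (x - p.2) * φ p.2) (σ.prod volume) := by
  obtain ⟨S, hS⟩ := hφc.isCompact.isBounded.subset_closedBall (0 : V)
  obtain ⟨M, hM⟩ := (isCompact_closedBall x (S + R)).exists_bound_of_continuousOn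
    (hv.continuous_iteratedFDeriv (m := 2) le_rfl).continuousOn
  have hbound (y z : V) (hy : ‖y‖ ≤ R) : ‖secondDiff v y (x - z) * φ z‖ ≤
      M * (‖y‖ ^ 2 * ‖φ z‖) := by
    by_cases hz : φ z = 0
    · simp [hz]
    rw [norm_mul, ← mul_assoc]
    gcongr
    refine norm_secondDiff_le_of_contDiff hv fun w hw ↦ hM w ?_
    have hzS : ‖z‖ ≤ S := by simpa using hS (subset_tsupport _ hz)
    rw [Metric.mem_closedBall, dist_eq_norm] at hw ⊢
    calc ‖w - x‖ = ‖(w - (x - z)) - z‖ := by congr 1; abel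
      _ ≤ ‖w - (x - z)‖ + ‖z‖ := norm_sub_le _ _
      _ ≤ S + R := by linarith
  have hm := measurable_secondDiff hv.continuous.measurable
  refine Integrable.mono'
    ((hσ.mul_prod (hφ.integrable_of_hasCompactSupport hφc).norm).const_mul M)
    (Measurable.aestronglyMeasurable ?_) ?_
  · exact (hm.comp (by fun_prop : Measurable fun p : V × V ↦ (p.1, x - p.2))).mul
      (hφ.measurable.comp measurable_snd)
  · filter_upwards [Measure.quasiMeasurePreserving_fst.ae hσR] with p hp
    exact hbound p.1 p.2 hp

variable [SFinite σ]

lemma HasPowerGrowth.integral_sub_mul_levyOp_eq_integral_prod (hv : HasPowerGrowth κ v) (hκ : 0 ≤ κ)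
    (hσ : Integrable (fun y ↦ ‖y‖ ^ 2) σ) (hσR : ∀ᵐ y ∂σ, ‖y‖ ≤ R) (ψ : 𝓢(V, ℂ)) (x : V) :
    ∫ z, v (x - z) * levyOp σ ψ z =
      ∫ p : V × V, v (x - p.2) * secondDiff ψ p.1 p.2 ∂(σ.prod volume) := by
  rw [integral_prod_symm _ (hv.integrable_prod_sub_mul_secondDiff hκ hσ hσR ψ x)]
  simp only [levyOp, integral_const_mul]

lemma HasPowerGrowth.integral_sub_mul_levyOp_of_hasCompactSupport (hv : HasPowerGrowth κ v)
    (hκ : 0 ≤ κ) (hv2 : ContDiff ℝ 2 v) (hσ : Integrable (fun y ↦ ‖y‖ ^ 2) σ)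
    (hσR : ∀ᵐ y ∂σ, ‖y‖ ≤ R) {ψ : 𝓢(V, ℂ)} (hψ : HasCompactSupport ψ) (x : V) :
    ∫ z, v (x - z) * levyOp σ ψ z = ∫ z, levyOp σ v (x - z) * ψ z := by
  have hint := integrable_prod_secondDiff_sub_mul hv2 hσ hσR ψ.continuous hψ x
  calc ∫ z, v (x - z) * levyOp σ ψ z
      = ∫ y, (∫ z, v (x - z) * secondDiff ψ y z) ∂σ := by
        rw [hv.integral_sub_mul_levyOp_eq_integral_prod hκ hσ hσR,
          integral_prod _ (hv.integrable_prod_sub_mul_secondDiff hκ hσ hσR ψ x)]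
    _ = ∫ y, (∫ z, secondDiff v y (x - z) * ψ z) ∂σ := by
        simp only [integral_sub_mul_secondDiff (hv.integrable_sub_mul_schwartz hκ ψ)]
    _ = ∫ z, levyOp σ v (x - z) * ψ z := by
        rw [integral_integral_swap hint]
        simp only [levyOp, integral_mul_const]

lemma HasPowerGrowth.integral_sub_mul_levyOp_eq (hv : HasPowerGrowth κ v) (hκ : 0 ≤ κ)
    (hv2 : ContDiff ℝ 2 v) (hσ : Integrable (fun y ↦ ‖y‖ ^ 2) σ) (hσR : ∀ᵐ y ∂σ, ‖y‖ ≤ R)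
    (hLv : HasPowerGrowth κ (levyOp σ v)) (ψ : 𝓢(V, ℂ)) (x : V) :
    ∫ z, v (x - z) * levyOp σ ψ z = ∫ z, levyOp σ v (x - z) * ψ z := by
  obtain ⟨Ψ, hΨc, hΨ, hΨb⟩ := exists_hasCompactSupport_approx_schwartz ψ
  obtain ⟨k, hk⟩ := exists_integrable_rpow_mul_inv_pow V κ
  have hleft : Tendsto (fun N ↦ ∫ z, v (x - z) * levyOp σ (Ψ N) z) atTop
      (𝓝 (∫ z, v (x - z) * levyOp σ ψ z)) := by
    simp only [hv.integral_sub_mul_levyOp_eq_integral_prod hκ hσ hσR]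
    obtain ⟨A, hA⟩ := hv.exists_bound
    obtain ⟨B, hB⟩ := hΨb k 2
    have hm (N : ℕ) := measurable_sub_mul_secondDiff hv.measurable (Ψ N).continuous.measurable x
    refine tendsto_integral_of_dominated_convergence _ (fun N ↦ (hm N).aestronglyMeasurable)
      ((hσ.mul_prod hk).const_mul (A * (1 + ‖x‖) ^ κ * (B * (1 + R) ^ k))) (fun N ↦ ?_)
      (ae_of_all _ fun p ↦ tendsto_const_nhds.congr' ?_)
    · filter_upwards [Measure.quasiMeasurePreserving_fst.ae hσR] with p hp
      exact norm_sub_mul_secondDiff_le hκ hA ((Ψ N).smooth 2) (hB N) hp x p.2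
    · filter_upwards [hΨ p.2, hΨ (p.2 + p.1), hΨ (p.2 - p.1)] with N h h₁ h₂
      simp only [secondDiff, h, h₁, h₂]
  have hright : Tendsto (fun N ↦ ∫ z, levyOp σ v (x - z) * Ψ N z) atTop
      (𝓝 (∫ z, levyOp σ v (x - z) * ψ z)) := by
    obtain ⟨A, hA⟩ := hLv.exists_nonneg_bound
    obtain ⟨B, hB⟩ := hΨb k 0
    have hm := hLv.measurable
    refine tendsto_integral_of_dominated_convergence _ (fun N ↦ ?_)
      (hk.const_mul (A * (1 + ‖x‖) ^ κ * B)) (fun N ↦ ae_of_all _ fun z ↦ ?_)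
      (ae_of_all _ fun z ↦ tendsto_const_nhds.congr' ?_)
    · exact (Measurable.aestronglyMeasurable (by fun_prop)).mul
        (Ψ N).continuous.aestronglyMeasurable
    · refine (norm_comp_sub_mul_le hκ hA.2 x z _).trans ?_
      have hBz : ‖Ψ N z‖ ≤ B * ((1 + ‖z‖) ^ k)⁻¹ := by simpa using hB N z
      calc _ ≤ A * (1 + ‖x‖) ^ κ * ((1 + ‖z‖) ^ κ * (B * ((1 + ‖z‖) ^ k)⁻¹)) := by
            have := hA.1
            gcongr
        _ = _ := by ring
    · filter_upwards [hΨ z] with N h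
      rw [h]
  refine tendsto_nhds_unique hleft (hright.congr fun N ↦ ?_)
  exact (hv.integral_sub_mul_levyOp_of_hasCompactSupport hκ hv2 hσ hσR (hΨc N) x).symm

end Symmetry

section ParametricInner

lemma integrable_norm_pow_pred_add_mul {V : Type*} [NormedAddCommGroup V] [MeasurableSpace V]
    {σ : Measure V} {f : V → ℝ} {p : ℕ} (hf : ∀ j, Integrable (fun y ↦ ‖y‖ ^ (p + j) * |f y|) σ)
    (j : ℕ) : Integrable (fun y ↦ ‖y‖ ^ (p - 1 + j) * |f y| * ‖y‖) σ := by
  refine (hf (p - 1 + j + 1 - p)).congr (ae_of_all _ fun y ↦ ?_)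
  simp only [show p + (p - 1 + j + 1 - p) = p - 1 + j + 1 by omega]
  ring

variable {V : Type*} [NormedAddCommGroup V] [InnerProductSpace ℝ V]

lemma abs_comp_inner_mul_le {h : ℝ → ℝ} {C : ℝ} {p : ℕ} (hC : 0 ≤ C)
    (hh : ∀ t, |h t| ≤ C * |t| ^ p) (y ξ : V) (a : ℝ) :
    |h ⟪y, ξ⟫ * a| ≤ C * ‖ξ‖ ^ p * (‖y‖ ^ p * |a|) := by
  calc |h ⟪y, ξ⟫ * a| ≤ C * (‖y‖ * ‖ξ‖) ^ p * |a| := by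
        rw [abs_mul]
        gcongr
        refine (hh _).trans ?_
        gcongr
        exact abs_real_inner_le_norm y ξ
    _ = _ := by ring

variable [MeasurableSpace V] [BorelSpace V] {σ : Measure V} {f : V → ℝ}

lemma integrable_comp_inner_mul {h : ℝ → ℝ} {C : ℝ} {p : ℕ} (hC : 0 ≤ C) (hhc : Continuous h)
    (hh : ∀ t, |h t| ≤ C * |t| ^ p) (hfm : AEStronglyMeasurable f σ)
    (hf : Integrable (fun y ↦ ‖y‖ ^ p * |f y|) σ) (ξ : V) :
    Integrable (fun y ↦ h ⟪y, ξ⟫ * f y) σ :=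
  (hf.const_mul (C * ‖ξ‖ ^ p)).mono' ((Continuous.aestronglyMeasurable (by fun_prop)).mul hfm)
    (ae_of_all _ fun y ↦ abs_comp_inner_mul_le hC hh y ξ (f y))

variable [FiniteDimensional ℝ V]

lemma integrable_comp_inner_mul_smul_innerSL {h : ℝ → ℝ} {C : ℝ} {p : ℕ} (hC : 0 ≤ C)
    (hhc : Continuous h) (hh : ∀ t, |h t| ≤ C * |t| ^ p) (hfm : AEStronglyMeasurable f σ)
    (hf : Integrable (fun y ↦ ‖y‖ ^ p * |f y| * ‖y‖) σ) (ξ : V) :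
    Integrable (fun y ↦ (h ⟪y, ξ⟫ * f y) • innerSL ℝ y) σ := by
  refine (hf.const_mul (C * ‖ξ‖ ^ p)).mono' (((Continuous.aestronglyMeasurable
    (by fun_prop)).mul hfm).smul (innerSL ℝ).continuous.aestronglyMeasurable)
    (ae_of_all _ fun y ↦ ?_)
  rw [norm_smul, innerSL_apply_norm, ← mul_assoc]
  exact mul_le_mul_of_nonneg_right (abs_comp_inner_mul_le hC hh y ξ (f y)) (norm_nonneg y)

lemma hasFDerivAt_integral_comp_inner_mul {h : ℝ → ℝ} {C D : ℝ} {p q : ℕ} (hC : 0 ≤ C)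
    (hD : 0 ≤ D) (hhc : ContDiff ℝ 1 h) (hh : ∀ t, |h t| ≤ C * |t| ^ p)
    (hh' : ∀ t, |deriv h t| ≤ D * |t| ^ q) (hfm : AEStronglyMeasurable f σ)
    (hfp : Integrable (fun y ↦ ‖y‖ ^ p * |f y|) σ)
    (hfq : Integrable (fun y ↦ ‖y‖ ^ q * |f y| * ‖y‖) σ) (ξ : V) :
    HasFDerivAt (fun ξ ↦ ∫ y, h ⟪y, ξ⟫ * f y ∂σ)
      (∫ y, (deriv h ⟪y, ξ⟫ * f y) • innerSL ℝ y ∂σ) ξ := by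
  have hint := integrable_comp_inner_mul hC hhc.continuous hh hfm hfp
  refine hasFDerivAt_integral_of_dominated_of_fderiv_le (𝕜 := ℝ)
    (F' := fun ξ y ↦ (deriv h ⟪y, ξ⟫ * f y) • innerSL ℝ y)
    (bound := fun y ↦ D * (‖ξ‖ + 1) ^ q * (‖y‖ ^ q * |f y| * ‖y‖))
    (Metric.ball_mem_nhds ξ one_pos) (.of_forall fun ξ ↦ (hint ξ).1) (hint ξ)
    (integrable_comp_inner_mul_smul_innerSL hD (hhc.continuous_deriv le_rfl) hh' hfm hfq ξ).1
    (ae_of_all _ fun y η hη ↦ ?_) (hfq.const_mul _) (ae_of_all _ fun y η _ ↦ ?_)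
  · have hη' : ‖η‖ ≤ ‖ξ‖ + 1 := by
      linarith [norm_le_insert' η ξ, mem_ball_iff_norm.1 hη]
    rw [norm_smul, innerSL_apply_norm, Real.norm_eq_abs]
    calc |deriv h ⟪y, η⟫ * f y| * ‖y‖ ≤ D * ‖η‖ ^ q * (‖y‖ ^ q * |f y|) * ‖y‖ := by
          gcongr
          exact abs_comp_inner_mul_le hD hh' y η (f y)
      _ ≤ D * (‖ξ‖ + 1) ^ q * (‖y‖ ^ q * |f y|) * ‖y‖ := by gcongr
      _ = _ := by ring
  · have hinner : HasFDerivAt (fun ξ ↦ ⟪y, ξ⟫) (innerSL ℝ y) η := (innerSL ℝ y).hasFDerivAt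
    have hhη : HasDerivAt h (deriv h ⟪y, η⟫) ⟪y, η⟫ :=
      (hhc.differentiable one_ne_zero).differentiableAt.hasDerivAt
    simpa [smul_smul, mul_comm] using (hhη.comp_hasFDerivAt η hinner).mul_const (f y)

lemma contDiff_integral_comp_inner_mul {h : ℝ → ℝ} {p : ℕ} (hhc : ContDiff ℝ ∞ h)
    (hh : ∀ j : ℕ, ∃ C, 0 ≤ C ∧ ∀ t, |iteratedDeriv j h t| ≤ C * |t| ^ (p - j))
    (hfm : AEStronglyMeasurable f σ)
    (hf : ∀ j : ℕ, Integrable (fun y ↦ ‖y‖ ^ (p + j) * |f y|) σ) :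
    ContDiff ℝ ∞ (fun ξ : V ↦ ∫ y, h ⟪y, ξ⟫ * f y ∂σ) := by
  refine contDiff_infty.2 fun n ↦ ?_
  induction n generalizing h f p with
  | zero =>
    obtain ⟨C, hC, hhC⟩ := hh 0
    obtain ⟨D, hD, hhD⟩ := hh 1
    simp only [iteratedDeriv_zero, iteratedDeriv_one, tsub_zero] at hhC hhD
    exact contDiff_zero.2 (Differentiable.continuous (𝕜 := ℝ) fun ξ ↦
      (hasFDerivAt_integral_comp_inner_mul hC hD (hhc.of_le (by simp)) hhC hhD hfm
        (hf 0) (integrable_norm_pow_pred_add_mul hf 0) ξ).differentiableAt)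
  | succ n ih =>
    obtain ⟨C, hC, hhC⟩ := hh 0
    obtain ⟨D, hD, hhD⟩ := hh 1
    simp only [iteratedDeriv_zero, iteratedDeriv_one, tsub_zero] at hhC hhD
    have hf1 := integrable_norm_pow_pred_add_mul hf
    have hhc1 : ContDiff ℝ 1 h := hhc.of_le (by simp)
    have hderiv := hasFDerivAt_integral_comp_inner_mul hC hD hhc1 hhC hhD hfm (hf 0) (hf1 0)
    push_cast
    refine contDiff_succ_iff_fderiv_apply.2
      ⟨fun ξ ↦ (hderiv ξ).differentiableAt, by simp, fun k ↦ ?_⟩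
    have hhj (j : ℕ) : ∃ B, 0 ≤ B ∧ ∀ t, |iteratedDeriv j (deriv h) t| ≤ B * |t| ^ (p - 1 - j) := by
      simpa only [← iteratedDeriv_succ', Nat.sub_sub, add_comm 1] using hh (j + 1)
    have hfk (j : ℕ) : Integrable (fun y ↦ ‖y‖ ^ (p - 1 + j) * |f y * ⟪y, k⟫|) σ := by
      refine ((hf1 j).const_mul ‖k‖).mono' (by fun_prop) (ae_of_all _ fun y ↦ ?_)
      rw [Real.norm_of_nonneg (by positivity), abs_mul]
      calc _ ≤ ‖y‖ ^ (p - 1 + j) * (|f y| * (‖y‖ * ‖k‖)) := by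
            gcongr
            exact abs_real_inner_le_norm y k
        _ = _ := by ring
    convert ih (contDiff_infty_iff_deriv.1 hhc).2 hhj (by fun_prop) hfk using 2 with ξ
    rw [(hderiv ξ).fderiv, ContinuousLinearMap.integral_apply
      (integrable_comp_inner_mul_smul_innerSL hD (hhc1.continuous_deriv le_rfl) hhD hfm (hf1 0) ξ)]
    simp [mul_assoc]

end ParametricInner

section Symbol

lemma two_sub_two_mul_cos_nonneg (t : ℝ) : 0 ≤ 2 - 2 * Real.cos t := by
  linarith [Real.cos_le_one t]

lemma two_sub_two_mul_cos_le_sq (t : ℝ) : 2 - 2 * Real.cos t ≤ t ^ 2 := by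
  linarith [Real.one_sub_sq_div_two_le_cos (x := t)]

lemma exists_abs_iteratedDeriv_two_sub_two_mul_cos_le (a : ℝ) (j : ℕ) :
    ∃ C, 0 ≤ C ∧ ∀ t, |iteratedDeriv j (fun t ↦ 2 - 2 * Real.cos (a * t)) t| ≤
      C * |t| ^ (2 - j) := by
  rcases j with _ | _ | j
  · refine ⟨a ^ 2, by positivity, fun t ↦ ?_⟩
    rw [iteratedDeriv_zero, abs_of_nonneg (two_sub_two_mul_cos_nonneg _), tsub_zero, sq_abs,
      ← mul_pow]
    exact two_sub_two_mul_cos_le_sq _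
  · refine ⟨2 * a ^ 2, by positivity, fun t ↦ ?_⟩
    have hderiv : HasDerivAt (fun t ↦ 2 - 2 * Real.cos (a * t)) (2 * a * Real.sin (a * t)) t := by
      refine ((((hasDerivAt_id' t).const_mul a).cos.const_mul 2).const_sub 2).congr_deriv ?_
      ring
    rw [zero_add, iteratedDeriv_one, hderiv.deriv, abs_mul, abs_mul]
    calc |2| * |a| * |Real.sin (a * t)| ≤ |2| * |a| * |a * t| :=
          mul_le_mul_of_nonneg_left Real.abs_sin_le_abs (by positivity)
      _ = _ := by
          rw [abs_mul, abs_two, ← sq_abs a]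
          ring
  · refine ⟨2 * |a| ^ (j + 2), by positivity, fun t ↦ ?_⟩
    rw [add_assoc, iteratedDeriv_const_sub (by omega), iteratedDeriv_neg,
      iteratedDeriv_const_mul_field, iteratedDeriv_comp_const_mul Real.contDiff_cos]
    rw [abs_neg, abs_mul, abs_mul, abs_pow, abs_two, Nat.sub_eq_zero_of_le (by omega), pow_zero]
    refine (mul_le_mul_of_nonneg_left (mul_le_of_le_one_right (by positivity)
      (Real.abs_iteratedDeriv_cos_le_one ..)) zero_le_two).trans_eq (mul_one _).symm

variable {V : Type*} [NormedAddCommGroup V] [InnerProductSpace ℝ V]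

lemma two_sub_two_mul_cos_inner_le (y ξ : V) :
    2 - 2 * Real.cos (2 * Real.pi * ⟪y, ξ⟫) ≤ (2 * Real.pi) ^ 2 * ‖ξ‖ ^ 2 * ‖y‖ ^ 2 := by
  calc _ ≤ (2 * Real.pi) ^ 2 * |⟪y, ξ⟫| ^ 2 := by
        rw [sq_abs, ← mul_pow]
        exact two_sub_two_mul_cos_le_sq _
    _ ≤ (2 * Real.pi) ^ 2 * (‖y‖ * ‖ξ‖) ^ 2 := by
        gcongr
        exact abs_real_inner_le_norm y ξ
    _ = _ := by ring

variable [MeasurableSpace V] {σ : Measure V}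

/-- The Fourier symbol of `-levyOp σ`. -/
noncomputable def levySymbol (σ : Measure V) (ξ : V) : ℝ :=
  ∫ y, (2 - 2 * Real.cos (2 * Real.pi * ⟪y, ξ⟫)) ∂σ

lemma levySymbol_nonneg (ξ : V) : 0 ≤ levySymbol σ ξ :=
  integral_nonneg fun _ ↦ two_sub_two_mul_cos_nonneg _

variable [BorelSpace V]

lemma integrable_two_sub_two_mul_cos_inner (hσ : Integrable (fun y ↦ ‖y‖ ^ 2) σ) (ξ : V) :
    Integrable (fun y ↦ 2 - 2 * Real.cos (2 * Real.pi * ⟪y, ξ⟫)) σ := by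
  refine Integrable.mono' (hσ.const_mul ((2 * Real.pi) ^ 2 * ‖ξ‖ ^ 2))
    (Continuous.aestronglyMeasurable (by fun_prop)) (ae_of_all _ fun y ↦ ?_)
  rw [Real.norm_of_nonneg (two_sub_two_mul_cos_nonneg _)]
  exact two_sub_two_mul_cos_inner_le y ξ

variable [FiniteDimensional ℝ V]

lemma contDiff_levySymbol {R : ℝ} (hσ : Integrable (fun y ↦ ‖y‖ ^ 2) σ)
    (hσR : ∀ᵐ y ∂σ, ‖y‖ ≤ R) : ContDiff ℝ ∞ (levySymbol σ) := by
  have hpow (j : ℕ) : Integrable (fun y ↦ ‖y‖ ^ (2 + j) * |(1 : ℝ)|) σ := by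
    refine (hσ.const_mul (R ^ j)).mono' (by fun_prop) ?_
    filter_upwards [hσR] with y hy
    rw [abs_one, mul_one, pow_add, mul_comm, Real.norm_of_nonneg (by positivity)]
    gcongr
  unfold levySymbol
  simpa using contDiff_integral_comp_inner_mul (by fun_prop)
    (exists_abs_iteratedDeriv_two_sub_two_mul_cos_le (2 * Real.pi)) aestronglyMeasurable_const hpow

lemma secondDiff_fourierInv (f : 𝓢(V, ℂ)) (y x : V) :
    secondDiff (𝓕⁻ (f : V → ℂ)) y x =
      -∫ ξ, ((2 - 2 * Real.cos (2 * Real.pi * ⟪y, ξ⟫) : ℝ) : ℂ) * (𝐞 ⟪ξ, x⟫ • f ξ) := by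
  have hi (x : V) : Integrable (fun ξ ↦ 𝐞 ⟪ξ, x⟫ • f ξ) := by
    have := f.continuous
    exact f.integrable.norm.mono' (Continuous.aestronglyMeasurable (by fun_prop))
      (ae_of_all _ fun y ↦ by simp)
  have hcos (ξ : V) : (𝐞 ⟪ξ, y⟫ : ℂ) + 𝐞 (-⟪ξ, y⟫) = 2 * Complex.cos (2 * Real.pi * ⟪y, ξ⟫) := by
    rw [Real.fourierChar_apply, Real.fourierChar_apply, Complex.two_cos, real_inner_comm]
    push_cast
    ring_nf
  simp only [secondDiff, Real.fourierInv_eq]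
  rw [← integral_const_mul, ← integral_add (hi _) (hi _)]
  refine (integral_sub ((hi _).add (hi _)) ((hi _).const_mul 2)).symm.trans ?_
  rw [← integral_neg]
  refine integral_congr_ae (ae_of_all _ fun ξ ↦ ?_)
  simp only [Pi.add_apply, inner_add_right, inner_neg_right, Circle.smul_def, smul_eq_mul,
    sub_eq_add_neg, AddChar.map_add_eq_mul, Circle.coe_mul]
  push_cast
  linear_combination (𝐞 ⟪ξ, x⟫ : ℂ) * f ξ * hcos ξ

lemma fourierInv_levySymbol_mul [SFinite σ] (hσ : Integrable (fun y ↦ ‖y‖ ^ 2) σ)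
    (f : 𝓢(V, ℂ)) (x : V) :
    𝓕⁻ (fun ξ ↦ (levySymbol σ ξ : ℂ) * f ξ) x = -levyOp σ (𝓕⁻ (f : V → ℂ)) x := by
  have hf : Continuous f := f.continuous
  have hint : Integrable (fun p : V × V ↦ ((2 - 2 * Real.cos (2 * Real.pi * ⟪p.1, p.2⟫) : ℝ) : ℂ) *
      (𝐞 ⟪p.2, x⟫ • f p.2)) (σ.prod volume) := by
    refine Integrable.mono' ((hσ.mul_prod (f.integrable_pow_mul volume 2)).const_mul
      ((2 * Real.pi) ^ 2)) (Continuous.aestronglyMeasurable (by fun_prop)) (ae_of_all _ fun p ↦ ?_)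
    rw [norm_mul, Circle.norm_smul, Complex.norm_real,
      Real.norm_of_nonneg (two_sub_two_mul_cos_nonneg _)]
    calc _ ≤ ((2 * Real.pi) ^ 2 * ‖p.2‖ ^ 2 * ‖p.1‖ ^ 2) * ‖f p.2‖ := by
          gcongr
          exact two_sub_two_mul_cos_inner_le p.1 p.2
      _ = _ := by ring
  simp_rw [levyOp, secondDiff_fourierInv, integral_neg, neg_neg]
  rw [integral_integral_swap hint, Real.fourierInv_eq]
  refine integral_congr_ae (ae_of_all _ fun ξ ↦ ?_)
  simp only
  rw [integral_mul_const, integral_complex_ofReal, ← levySymbol, mul_smul_comm]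

end Symbol

section FourierMulEq

variable {V : Type*} [NormedAddCommGroup V] [InnerProductSpace ℝ V] [FiniteDimensional ℝ V]
  [MeasurableSpace V] [BorelSpace V] {σ τ : Measure V} {κ R : ℝ} {v w : V → ℂ} {A : V → ℝ}

/-- The identity `A v̂ = ŵ` of tempered distributions, for functions `v` and `w` of polynomial
growth. It is tested only against Schwartz functions `g` for which `A g` is again Schwartz, so that
no growth assumption on `A` is needed. -/
def FourierMulEq (A : V → ℝ) (v w : V → ℂ) : Prop :=
  ∀ f g : 𝓢(V, ℂ), (∀ ξ, f ξ = A ξ * g ξ) →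
    ∀ x, ∫ z, v (x - z) * (𝓕⁻ f) z = ∫ z, w (x - z) * (𝓕⁻ g) z

lemma FourierMulEq.map_symmConv [SFinite τ] (h : FourierMulEq A v w) (hv : HasPowerGrowth κ v)
    (hw : HasPowerGrowth κ w) (hκ : 0 ≤ κ) (hτ : Integrable (fun y ↦ (1 + ‖y‖) ^ κ) τ) :
    FourierMulEq A (symmConv τ v) (symmConv τ w) := by
  intro f g hfg x
  rw [← hv.symmConv_integral_sub_mul hκ hτ (𝓕⁻ f).continuous.aestronglyMeasurable
      (integrable_rpow_mul_norm_schwartz _ κ),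
    ← hw.symmConv_integral_sub_mul hκ hτ (𝓕⁻ g).continuous.aestronglyMeasurable
      (integrable_rpow_mul_norm_schwartz _ κ), funext (h f g hfg)]

lemma FourierMulEq.iterate_symmConv [SFinite τ] (h : FourierMulEq A v (symmConv τ v))
    (hv : HasPowerGrowth κ v) (hκ : 0 ≤ κ) (hτ : Integrable (fun y ↦ (1 + ‖y‖) ^ κ) τ) (N : ℕ) :
    FourierMulEq A ((symmConv τ)^[N] v) ((symmConv τ)^[N + 1] v) := by
  induction N with
  | zero => exact h
  | succ N ih =>
    simpa only [Function.iterate_succ_apply'] using ih.map_symmConv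
      (hasPowerGrowth_iterate_symmConv hv hκ hτ N) (hasPowerGrowth_iterate_symmConv hv hκ hτ _)
      hκ hτ

lemma fourierInv_eq_of_eq_add_levySymbol_mul [SFinite σ] (hσ : Integrable (fun y ↦ ‖y‖ ^ 2) σ)
    {f g : 𝓢(V, ℂ)} {c : ℝ} (h : ∀ ξ, f ξ = ((c + levySymbol σ ξ : ℝ) : ℂ) * g ξ) (z : V) :
    (𝓕⁻ f) z = c * (𝓕⁻ g) z - levyOp σ (𝓕⁻ g : 𝓢(V, ℂ)) z := by
  have hfg : (fun ξ ↦ (levySymbol σ ξ : ℂ) * g ξ) = ⇑(f - (c : ℂ) • g) := by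
    ext ξ
    simp only [sub_apply, smul_apply, h, smul_eq_mul]
    push_cast
    ring
  have hinv := fourierInv_levySymbol_mul hσ g z
  rw [hfg, ← SchwartzMap.fourierInv_coe, ← SchwartzMap.fourierInv_coe, sub_eq_add_neg,
    FourierTransform.fourierInv_add, FourierTransform.fourierInv_neg,
    FourierTransform.fourierInv_smul, add_apply, neg_apply, smul_apply, smul_eq_mul] at hinv
  linear_combination hinv

lemma fourierMulEq_of_levyOp_eq [SFinite σ] {c : ℝ} (hv : HasPowerGrowth κ v)
    (hw : HasPowerGrowth κ w) (hκ : 0 ≤ κ) (hv2 : ContDiff ℝ 2 v)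
    (hσ : Integrable (fun y ↦ ‖y‖ ^ 2) σ) (hσR : ∀ᵐ y ∂σ, ‖y‖ ≤ R)
    (h : ∀ x, levyOp σ v x = c * v x - w x) :
    FourierMulEq (fun ξ ↦ c + levySymbol σ ξ) v w := by
  intro f g hfg x
  have hi (u : V → ℂ) (hu : HasPowerGrowth κ u) : Integrable fun z ↦ u (x - z) * (𝓕⁻ g) z :=
    hu.integrable_sub_mul_schwartz hκ (𝓕⁻ g) x
  have hLv : HasPowerGrowth κ (levyOp σ v) := by
    rw [funext h]
    exact (hv.const_mul c).sub hw
  have hiL : Integrable fun z ↦ v (x - z) * levyOp σ (𝓕⁻ g : 𝓢(V, ℂ)) z := by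
    simpa only [levyOp, integral_const_mul] using
      (hv.integrable_prod_sub_mul_secondDiff hκ hσ hσR (𝓕⁻ g) x).integral_prod_right
  calc ∫ z, v (x - z) * (𝓕⁻ f) z
      = ∫ z, (c * (v (x - z) * (𝓕⁻ g) z) - v (x - z) * levyOp σ (𝓕⁻ g : 𝓢(V, ℂ)) z) := by
        simp only [fourierInv_eq_of_eq_add_levySymbol_mul hσ hfg, mul_sub, mul_left_comm]
    _ = ∫ z, (c * (v (x - z) * (𝓕⁻ g) z) - levyOp σ v (x - z) * (𝓕⁻ g) z) := by
        rw [integral_sub ((hi v hv).const_mul _) hiL,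
          integral_sub ((hi v hv).const_mul _) (hi _ hLv),
          hv.integral_sub_mul_levyOp_eq hκ hv2 hσ hσR hLv]
    _ = ∫ z, w (x - z) * (𝓕⁻ g) z := by
        congr with z
        rw [h]
        ring

end FourierMulEq

section Localization

lemma norm_iteratedFDeriv_mul_le_add {V : Type*} [NormedAddCommGroup V] [NormedSpace ℝ V]
    {f g : V → ℂ} (hf : ContDiff ℝ ∞ f) (hg : ContDiff ℝ ∞ g) {G : ℕ → ℝ} {B : ℝ} {ξ : V} {l : ℕ}
    (hG : ∀ j, ‖iteratedFDeriv ℝ j g ξ‖ ≤ G j) (hB : ∀ j < l, ‖iteratedFDeriv ℝ j f ξ‖ ≤ B) :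
    ‖iteratedFDeriv ℝ l (fun ξ ↦ f ξ * g ξ) ξ‖ ≤
      B * ∑ j ∈ Finset.range l, l.choose j * G (l - j) + ‖iteratedFDeriv ℝ l f ξ‖ * ‖g ξ‖ := by
  refine (norm_iteratedFDeriv_mul_le hf hg ξ (n := l) (mod_cast le_top)).trans ?_
  rw [Finset.sum_range_succ, Nat.choose_self, Nat.cast_one, one_mul, Nat.sub_self,
    norm_iteratedFDeriv_zero, Finset.mul_sum]
  refine add_le_add_left (Finset.sum_le_sum fun j hj ↦ ?_) _
  have hfj := hB j (Finset.mem_range.1 hj)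
  have hB0 : 0 ≤ B := (norm_nonneg _).trans hfj
  rw [mul_left_comm B, mul_assoc]
  gcongr
  exact hG _

lemma exists_norm_iteratedFDeriv_mul_pow_le {V : Type*} [NormedAddCommGroup V] [NormedSpace ℝ V]
    {f g : V → ℂ} (hf : ContDiff ℝ ∞ f) (hfs : HasCompactSupport f) (hg : ContDiff ℝ ∞ g)
    {θ₀ θ : ℝ} (hθ₀ : 0 ≤ θ₀) (hθ : θ₀ < θ) (hgθ : ∀ ξ ∈ tsupport f, ‖g ξ‖ ≤ θ₀) (l : ℕ) :
    ∃ C, 0 ≤ C ∧ ∀ i < l, ∀ (N : ℕ), ∀ ξ ∈ tsupport f,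
      ‖iteratedFDeriv ℝ i (fun ξ ↦ f ξ * g ξ ^ N) ξ‖ ≤ C * θ ^ N := by
  have hθ1 : 0 < θ := hθ₀.trans_lt hθ
  have hsub : 0 < θ - θ₀ := sub_pos.2 hθ
  induction l with
  | zero => exact ⟨0, le_rfl, fun i hi ↦ absurd hi (Nat.not_lt_zero i)⟩
  | succ l ih =>
    obtain ⟨C, hC0, hC⟩ := ih
    have hbound {h : V → ℂ} (hh : ContDiff ℝ ∞ h) (j : ℕ) :
        ∃ G, 0 ≤ G ∧ ∀ ξ ∈ tsupport f, ‖iteratedFDeriv ℝ j h ξ‖ ≤ G := by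
      obtain ⟨G, hG⟩ := IsCompact.exists_bound_of_continuousOn hfs
        (hh.continuous_iteratedFDeriv (m := j) (mod_cast le_top)).continuousOn
      exact ⟨|G|, abs_nonneg G, fun ξ hξ ↦ (hG ξ hξ).trans (le_abs_self G)⟩
    choose G hG0 hG using hbound hg
    obtain ⟨B, hB0, hB⟩ := hbound hf l
    set D := ∑ j ∈ Finset.range l, l.choose j * G (l - j)
    have hD0 : 0 ≤ D := Finset.sum_nonneg fun j _ ↦ mul_nonneg (Nat.cast_nonneg _) (hG0 _)
    have hq : 0 ≤ C * D / (θ - θ₀) := by positivity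
    refine ⟨C + B + C * D / (θ - θ₀), by positivity, fun i hi N ξ hξ ↦ ?_⟩
    rcases Nat.lt_succ_iff_lt_or_eq.1 hi with hi | rfl
    · refine (hC i hi N ξ hξ).trans ?_
      gcongr
      linarith
    induction N with
    | zero =>
      simp only [pow_zero, mul_one]
      linarith [hB ξ hξ]
    | succ N ihN =>
      simp only [pow_succ, ← mul_assoc]
      calc _ ≤ C * θ ^ N * D + (C + B + C * D / (θ - θ₀)) * θ ^ N * θ₀ := by
            refine (norm_iteratedFDeriv_mul_le_add (hf.mul (hg.pow N)) hg (fun j ↦ hG j ξ hξ)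
              fun j hj ↦ hC j hj N ξ hξ).trans ?_
            gcongr
            exact hgθ ξ hξ
        _ = (C * D / (θ - θ₀) * (θ - θ₀) + (C + B + C * D / (θ - θ₀)) * θ₀) * θ ^ N := by
            rw [div_mul_cancel₀ _ hsub.ne']
            ring
        _ ≤ ((C + B + C * D / (θ - θ₀)) * (θ - θ₀) + (C + B + C * D / (θ - θ₀)) * θ₀) * θ ^ N := by
            gcongr
            linarith
        _ = _ := by ring

variable {V : Type*} [NormedAddCommGroup V] [NormedSpace ℝ V]

lemma iteratedFDeriv_eq_zero_of_notMem_tsupport {f g : V → ℂ} {ξ : V} (hξ : ξ ∉ tsupport f)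
    (l : ℕ) : iteratedFDeriv ℝ l (fun ξ ↦ f ξ * g ξ) ξ = 0 := by
  by_contra h
  exact hξ (tsupport_mul_subset_left (support_iteratedFDeriv_subset l h))

lemma tendsto_pow_smul_schwartz_mul_pow {f g : V → ℂ} {F : ℕ → 𝓢(V, ℂ)} (hf : ContDiff ℝ ∞ f)
    (hfs : HasCompactSupport f) (hg : ContDiff ℝ ∞ g) (hF : ∀ N ξ, F N ξ = f ξ * g ξ ^ N)
    {θ₀ M : ℝ} (hθ₀ : 0 ≤ θ₀) (hgθ : ∀ ξ ∈ tsupport f, ‖g ξ‖ ≤ θ₀) (hM : 0 < M)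
    (hMθ : M * θ₀ < 1) : Tendsto (fun N : ℕ ↦ (M ^ N : ℝ) • F N) atTop (𝓝 0) := by
  obtain ⟨θ, hθ, hθM⟩ := exists_between ((lt_inv_mul_iff₀ hM).2 hMθ)
  have hθ0 : 0 < θ := hθ₀.trans_lt hθ
  have hMθ1 : M * θ < 1 := (lt_inv_mul_iff₀ hM).1 hθM
  obtain ⟨R, hR0, hR⟩ := hfs.isCompact.isBounded.exists_pos_norm_le
  rw [(schwartz_withSeminorms ℝ V ℂ).tendsto_nhds]
  rintro ⟨k, l⟩ ε hε
  obtain ⟨D, hD0, hD⟩ := exists_norm_iteratedFDeriv_mul_pow_le hf hfs hg hθ₀ hθ hgθ (l + 1)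
  have hseminorm (N : ℕ) : SchwartzMap.seminorm ℝ k l (F N) ≤ R ^ k * (D * θ ^ N) := by
    refine SchwartzMap.seminorm_le_bound ℝ k l _ (by positivity) fun ξ ↦ ?_
    rw [funext (hF N)]
    by_cases hξ : ξ ∈ tsupport f
    · gcongr
      · exact hR ξ hξ
      · exact hD l (Nat.lt_succ_self l) N ξ hξ
    · rw [iteratedFDeriv_eq_zero_of_notMem_tsupport hξ, norm_zero, mul_zero]
      positivity
  have hlim : Tendsto (fun N : ℕ ↦ R ^ k * D * (M * θ) ^ N) atTop (𝓝 0) := by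
    simpa using (tendsto_pow_atTop_nhds_zero_of_lt_one (by positivity) hMθ1).const_mul _
  filter_upwards [hlim.eventually_lt_const hε] with N hN
  rw [sub_zero, map_smul_eq_mul, Real.norm_of_nonneg (by positivity)]
  calc _ ≤ M ^ N * (R ^ k * (D * θ ^ N)) := by
        gcongr
        exact hseminorm N
    _ = R ^ k * D * (M * θ) ^ N := by
        rw [mul_pow]
        ring
    _ < ε := hN

end Localization

section Pairing

variable {V : Type*} [NormedAddCommGroup V] [InnerProductSpace ℝ V] [FiniteDimensional ℝ V]
  [MeasurableSpace V] [BorelSpace V] {τ : Measure V} {κ : ℝ} {v : V → ℂ} {A : V → ℝ}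

lemma tendsto_integral_mul_fourierInv {F : ℕ → 𝓢(V, ℂ)} {w : ℕ → V → ℂ} {B M : ℝ} (hκ : 0 ≤ κ)
    (hM : 0 ≤ M) (hF : Tendsto (fun N ↦ (M ^ N : ℝ) • F N) atTop (𝓝 0))
    (hw : ∀ N x, ‖w N x‖ ≤ B * M ^ N * (1 + ‖x‖) ^ κ) (x : V) :
    Tendsto (fun N ↦ ∫ z, w N (x - z) * (𝓕⁻ (F N)) z) atTop (𝓝 0) := by
  obtain ⟨k, hk⟩ := exists_integrable_rpow_mul_inv_pow V κ
  let p : Seminorm ℝ 𝓢(V, ℂ) := (Finset.Iic (k, 0)).sup (schwartzSeminormFamily ℝ V ℂ)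
  have hlim : Tendsto (fun N ↦ (M ^ N : ℝ) • (𝓕⁻ (F N) : 𝓢(V, ℂ))) atTop (𝓝 0) := by
    simpa only [Function.comp_def, FourierTransform.fourierInv_smul,
      FourierTransform.fourierInv_zero] using
      (ContinuousFourierInv.continuous_fourierInv.tendsto (0 : 𝓢(V, ℂ))).comp hF
  have hp : Tendsto (fun N ↦ M ^ N * p (𝓕⁻ (F N))) atTop (𝓝 0) := by
    refine Metric.tendsto_nhds.2 fun ε hε ↦ ?_
    filter_upwards [(schwartz_withSeminorms ℝ V ℂ).tendsto_nhds' _ _ |>.1 hlim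
      (Finset.Iic (k, 0)) ε hε] with N hN
    rw [sub_zero, map_smul_eq_mul, Real.norm_of_nonneg (by positivity)] at hN
    rwa [dist_zero_right, Real.norm_of_nonneg (by positivity)]
  have hdecay (φ : 𝓢(V, ℂ)) (z : V) : ‖φ z‖ ≤ 2 ^ k * p φ * ((1 + ‖z‖) ^ k)⁻¹ := by
    have := SchwartzMap.one_add_le_sup_seminorm_apply (𝕜 := ℝ) (m := (k, 0)) le_rfl le_rfl φ z
    rw [norm_iteratedFDeriv_zero] at this
    rw [← div_eq_mul_inv, le_div_iff₀ (by positivity), mul_comm]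
    exact this
  have hbound (N : ℕ) : ‖∫ z, w N (x - z) * (𝓕⁻ (F N)) z‖ ≤
      B * (1 + ‖x‖) ^ κ * 2 ^ k * (∫ z : V, (1 + ‖z‖) ^ κ * ((1 + ‖z‖) ^ k)⁻¹) *
        (M ^ N * p (𝓕⁻ (F N))) := by
    refine (norm_integral_le_of_norm_le (hk.const_mul
      (B * M ^ N * (1 + ‖x‖) ^ κ * (2 ^ k * p (𝓕⁻ (F N))))) (ae_of_all _ fun z ↦ ?_)).trans_eq ?_
    · have hB : 0 ≤ B * M ^ N := by simpa using (norm_nonneg _).trans (hw N 0)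
      refine (norm_comp_sub_mul_le hκ (hw N) x z _).trans ?_
      calc _ ≤ B * M ^ N * (1 + ‖x‖) ^ κ * ((1 + ‖z‖) ^ κ *
            (2 ^ k * p (𝓕⁻ (F N)) * ((1 + ‖z‖) ^ k)⁻¹)) := by
            gcongr
            exact hdecay _ z
        _ = _ := by ring
    · rw [integral_const_mul]
      ring
  refine squeeze_zero_norm hbound ?_
  simpa only [mul_zero] using hp.const_mul _

/-- With `T := symmConv τ`, iterating `A v̂ = (T v)^` gives `v̂ = A⁻ᴺ (Tᴺ v)^`. -/
lemma FourierMulEq.integral_mul_fourierInv_eq [SFinite τ] (h : FourierMulEq A v (symmConv τ v))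
    (hv : HasPowerGrowth κ v) (hκ : 0 ≤ κ) (hτ : Integrable (fun y ↦ (1 + ‖y‖) ^ κ) τ)
    (hA : ∀ ξ, A ξ ≠ 0) {F : ℕ → 𝓢(V, ℂ)} (hF : ∀ N ξ, F N ξ = F 0 ξ * ((A ξ)⁻¹ : ℝ) ^ N)
    (x : V) (N : ℕ) :
    ∫ z, v (x - z) * (𝓕⁻ (F 0)) z = ∫ z, (symmConv τ)^[N] v (x - z) * (𝓕⁻ (F N)) z := by
  induction N with
  | zero => rfl
  | succ N ih =>
    rw [ih]
    refine h.iterate_symmConv hv hκ hτ N (F N) (F (N + 1)) (fun ξ ↦ ?_) x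
    have hAξ : (A ξ : ℂ) ≠ 0 := Complex.ofReal_ne_zero.2 (hA ξ)
    rw [hF, hF (N + 1)]
    push_cast
    rw [pow_succ']
    field_simp

lemma FourierMulEq.integral_mul_fourierInv_eq_zero [IsFiniteMeasure τ]
    (h : FourierMulEq A v (symmConv τ v)) (hv : HasPowerGrowth κ v) (hκ : 0 ≤ κ)
    (hτ : Integrable (fun y ↦ (1 + ‖y‖) ^ κ) τ) (hA : ContDiff ℝ ∞ A) (hA0 : ∀ ξ, 0 < A ξ)
    {f : 𝓢(V, ℂ)} (hf : HasCompactSupport f) (hAf : ∀ ξ ∈ tsupport f, 2 * τ.real Set.univ < A ξ)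
    (x : V) : ∫ z, v (x - z) * (𝓕⁻ f) z = 0 := by
  obtain ⟨a, ha, haA⟩ := hf.isCompact.exists_forall_le' hA.continuous.continuousOn hAf
  obtain ⟨M, hM, hMa⟩ := exists_between ha
  have hM0 : 0 < M := (mul_nonneg zero_le_two measureReal_nonneg).trans_lt hM
  let g : V → ℂ := fun ξ ↦ ((A ξ)⁻¹ : ℝ)
  have hg : ContDiff ℝ ∞ g := Complex.ofRealCLM.contDiff.comp (hA.inv fun ξ ↦ (hA0 ξ).ne')
  have hga (ξ) (hξ : ξ ∈ tsupport f) : ‖g ξ‖ ≤ a⁻¹ := by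
    rw [Complex.norm_real, Real.norm_of_nonneg (inv_nonneg.2 (hA0 ξ).le)]
    exact inv_anti₀ (hM0.trans hMa) (haA ξ hξ)
  let F (N : ℕ) : 𝓢(V, ℂ) :=
    (hf.mul_right (f' := fun ξ ↦ g ξ ^ N)).toSchwartzMap ((f.smooth ⊤).mul (hg.pow N))
  have hF (N ξ) : F N ξ = f ξ * g ξ ^ N := rfl
  have hF0 : F 0 = f := by
    ext ξ
    rw [hF, pow_zero, mul_one]
  obtain ⟨B, hB⟩ := hv.exists_norm_iterate_symmConv_le hκ hτ hM
  have hlim := tendsto_integral_mul_fourierInv hκ hM0.le (tendsto_pow_smul_schwartz_mul_pow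
    (f.smooth ⊤) hf hg hF (inv_nonneg.2 (hM0.trans hMa).le) hga hM0
    ((mul_inv_lt_iff₀ (hM0.trans hMa)).2 (by rwa [one_mul]))) hB x
  refine tendsto_nhds_unique (tendsto_const_nhds.congr fun N ↦ ?_) hlim
  rw [← hF0]
  exact h.integral_mul_fourierInv_eq hv hκ hτ (fun ξ ↦ (hA0 ξ).ne') (fun N ξ ↦ by rw [hF0, hF]) x N

end Pairing

section LevyIntegrability

variable {V : Type*} [NormedAddCommGroup V] [MeasurableSpace V]
  {ν τ : Measure V} {κ R : ℝ} {v : V → ℂ}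

lemma isFiniteMeasure_of_integrable_one_add_norm_rpow (hκ : 0 ≤ κ)
    (hτ : Integrable (fun y ↦ (1 + ‖y‖) ^ κ) τ) : IsFiniteMeasure τ := by
  have : Integrable (fun _ ↦ (1 : ℝ)) τ := hτ.mono' (by fun_prop) (ae_of_all _ fun y ↦ by
    rw [norm_one]
    exact Real.one_le_rpow (by linarith [norm_nonneg y]) hκ)
  exact (integrable_const_iff.1 this).resolve_left one_ne_zero

variable [BorelSpace V]

lemma integrable_sq_restrict_closedBall (hν : Integrable (fun y ↦ min (‖y‖ ^ 2) (‖y‖ ^ κ)) ν)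
    (hκ : 0 ≤ κ) (hκ2 : κ ≤ 2) (hR : 1 ≤ R) :
    Integrable (fun y ↦ ‖y‖ ^ 2) (ν.restrict (Metric.closedBall 0 R)) := by
  refine Integrable.mono' (hν.restrict.const_mul (R ^ 2))
    (Measurable.aestronglyMeasurable (by fun_prop)) ?_
  filter_upwards [ae_restrict_mem Metric.isClosed_closedBall.measurableSet] with y hy
  rw [mem_closedBall_zero_iff] at hy
  rw [Real.norm_of_nonneg (by positivity)]
  rcases le_total ‖y‖ 1 with hy1 | hy1
  · have : ‖y‖ ^ 2 ≤ ‖y‖ ^ κ := by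
      rw [← Real.rpow_two]
      exact Real.rpow_le_rpow_of_exponent_ge_of_imp (norm_nonneg y) hy1 hκ2 fun _ h ↦
        absurd h two_ne_zero
    rw [min_eq_left this]
    exact le_mul_of_one_le_left (by positivity) (one_le_pow₀ hR)
  · have : (1 : ℝ) ≤ min (‖y‖ ^ 2) (‖y‖ ^ κ) :=
      le_min (one_le_pow₀ hy1) (Real.one_le_rpow hy1 hκ)
    calc ‖y‖ ^ 2 ≤ R ^ 2 := by gcongr
      _ ≤ _ := le_mul_of_one_le_right (by positivity) this

lemma integrable_one_add_norm_rpow_restrict_compl_closedBall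
    (hν : Integrable (fun y ↦ min (‖y‖ ^ 2) (‖y‖ ^ κ)) ν) (hκ : 0 ≤ κ) (hκ2 : κ ≤ 2) (hR : 1 ≤ R) :
    Integrable (fun y ↦ (1 + ‖y‖) ^ κ) (ν.restrict (Metric.closedBall 0 R)ᶜ) := by
  refine Integrable.mono' (hν.restrict.const_mul (2 ^ κ))
    (Measurable.aestronglyMeasurable (by fun_prop)) ?_
  filter_upwards [ae_restrict_mem Metric.isClosed_closedBall.measurableSet.compl] with y hy
  rw [Set.mem_compl_iff, mem_closedBall_zero_iff, not_le] at hy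
  have hy1 : 1 ≤ ‖y‖ := hR.trans hy.le
  have hmin : ‖y‖ ^ κ ≤ ‖y‖ ^ 2 := by
    rw [← Real.rpow_two]
    exact Real.rpow_le_rpow_of_exponent_le hy1 hκ2
  rw [Real.norm_of_nonneg (by positivity), min_eq_right hmin,
    ← Real.mul_rpow zero_le_two (norm_nonneg y)]
  gcongr
  linarith

lemma HasPowerGrowth.integrable_secondDiff [IsFiniteMeasure τ] (hv : HasPowerGrowth κ v)
    (hκ : 0 ≤ κ) (hτ : Integrable (fun y ↦ (1 + ‖y‖) ^ κ) τ) (x : V) :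
    Integrable (fun y ↦ secondDiff v y x) τ :=
  (hv.integrable_add_add_sub hκ hτ x).sub (integrable_const _)

lemma HasPowerGrowth.levyOp_eq_symmConv_sub [IsFiniteMeasure τ] (hv : HasPowerGrowth κ v)
    (hκ : 0 ≤ κ) (hτ : Integrable (fun y ↦ (1 + ‖y‖) ^ κ) τ) (x : V) :
    levyOp τ v x = symmConv τ v x - 2 * τ.real Set.univ * v x := by
  unfold levyOp secondDiff symmConv
  rw [integral_sub (hv.integrable_add_add_sub hκ hτ x) (integrable_const _), integral_const,
    Complex.real_smul]
  ring

lemma HasPowerGrowth.levyOp_add_dirac_zero [IsFiniteMeasure τ] (hv : HasPowerGrowth κ v)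
    (hκ : 0 ≤ κ) (hτ : Integrable (fun y ↦ (1 + ‖y‖) ^ κ) τ) (x : V) :
    levyOp (τ + Measure.dirac 0) v x = levyOp τ v x := by
  unfold levyOp
  rw [integral_add_measure (hv.integrable_secondDiff hκ hτ x) (integrable_dirac (by simp)),
    integral_dirac, add_eq_left, secondDiff]
  simp only [add_zero, sub_zero]
  ring

end LevyIntegrability

section SpectrumAtZero

variable {V : Type*} [NormedAddCommGroup V] [InnerProductSpace ℝ V] [FiniteDimensional ℝ V]
  [MeasurableSpace V] [BorelSpace V] {σ τ ν : Measure V} {κ R : ℝ} {v : V → ℂ}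

lemma integrable_secondDiff_of_contDiff (hv : ContDiff ℝ 2 v)
    (hσ : Integrable (fun y ↦ ‖y‖ ^ 2) σ) (hσR : ∀ᵐ y ∂σ, ‖y‖ ≤ R) (x : V) :
    Integrable (fun y ↦ secondDiff v y x) σ := by
  obtain ⟨M, hM⟩ := (isCompact_closedBall x R).exists_bound_of_continuousOn
    (hv.continuous_iteratedFDeriv le_rfl).continuousOn
  have hvc := hv.continuous
  refine (hσ.const_mul M).mono' (Continuous.aestronglyMeasurable ?_) ?_
  · unfold secondDiff
    fun_prop
  · filter_upwards [hσR] with y hy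
    exact norm_secondDiff_le_of_contDiff hv fun z hz ↦
      hM z (Metric.closedBall_subset_closedBall hy hz)

lemma HasPowerGrowth.levyOp_restrict_add_levyOp_restrict_compl (hv : HasPowerGrowth κ v)
    (hν : Integrable (fun y ↦ min (‖y‖ ^ 2) (‖y‖ ^ κ)) ν) (hκ : 0 ≤ κ) (hκ2 : κ ≤ 2) (hR : 1 ≤ R)
    (hv2 : ContDiff ℝ 2 v) (x : V) :
    levyOp (ν.restrict (Metric.closedBall 0 R)) v x +
      levyOp (ν.restrict (Metric.closedBall 0 R)ᶜ) v x = levyOp ν v x := by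
  have hball : MeasurableSet (Metric.closedBall (0 : V) R) :=
    Metric.isClosed_closedBall.measurableSet
  have hτ := integrable_one_add_norm_rpow_restrict_compl_closedBall hν hκ hκ2 hR
  have := isFiniteMeasure_of_integrable_one_add_norm_rpow hκ hτ
  have hsmall := integrable_secondDiff_of_contDiff (R := R) hv2
    (integrable_sq_restrict_closedBall hν hκ hκ2 hR)
    ((ae_restrict_mem hball).mono fun y hy ↦ mem_closedBall_zero_iff.1 hy) x
  refine integral_add_compl hball ?_
  rw [← integrableOn_univ, ← Set.union_compl_self (Metric.closedBall 0 R)]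
  exact IntegrableOn.union hsmall (hv.integrable_secondDiff hκ hτ x)

lemma integrable_two_sub_two_mul_cos_inner_of_min
    (hν : Integrable (fun y ↦ min (‖y‖ ^ 2) (‖y‖ ^ κ)) ν) (hκ : 0 ≤ κ) (hκ2 : κ ≤ 2) (ξ : V) :
    Integrable (fun y ↦ 2 - 2 * Real.cos (2 * Real.pi * ⟪y, ξ⟫)) ν := by
  have := isFiniteMeasure_of_integrable_one_add_norm_rpow hκ
    (integrable_one_add_norm_rpow_restrict_compl_closedBall hν hκ hκ2 le_rfl)
  rw [← integrableOn_univ, ← Set.union_compl_self (Metric.closedBall 0 1)]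
  refine IntegrableOn.union (integrable_two_sub_two_mul_cos_inner
    (integrable_sq_restrict_closedBall hν hκ hκ2 le_rfl) ξ) ?_
  refine Integrable.of_bound (C := 4) (Measurable.aestronglyMeasurable (by fun_prop))
    (ae_of_all _ fun y ↦ ?_)
  rw [Real.norm_of_nonneg (two_sub_two_mul_cos_nonneg _)]
  linarith [Real.neg_one_le_cos (2 * Real.pi * ⟪y, ξ⟫)]

lemma exists_forall_levySymbol_restrict_pos
    (hν : Integrable (fun y ↦ min (‖y‖ ^ 2) (‖y‖ ^ κ)) ν) (hκ : 0 ≤ κ) (hκ2 : κ ≤ 2)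
    {K : Set V} (hK : IsCompact K) (hpos : ∀ ξ ∈ K, 0 < levySymbol ν ξ) :
    ∃ R, 1 ≤ R ∧ ∀ ξ ∈ K, 0 < levySymbol (ν.restrict (Metric.closedBall 0 R)) ξ := by
  let σ (n : ℕ) : Measure V := ν.restrict (Metric.closedBall 0 (n + 1))
  have hR (n : ℕ) : (1 : ℝ) ≤ n + 1 := le_add_of_nonneg_left n.cast_nonneg
  have hσ (n : ℕ) := integrable_sq_restrict_closedBall hν hκ hκ2 (hR n)
  have hcont (n : ℕ) : Continuous (levySymbol (σ n)) :=
    (contDiff_levySymbol (hσ n) ((ae_restrict_mem Metric.isClosed_closedBall.measurableSet).mono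
      fun y hy ↦ mem_closedBall_zero_iff.1 hy)).continuous
  have hmono (ξ : V) : Monotone fun n ↦ levySymbol (σ n) ξ := fun m n hmn ↦
    setIntegral_mono_set (integrable_two_sub_two_mul_cos_inner (hσ n) ξ)
      (ae_of_all _ fun y ↦ two_sub_two_mul_cos_nonneg _)
      (Metric.closedBall_subset_closedBall (by gcongr)).eventuallyLE
  have hexists (ξ) (hξ : ξ ∈ K) : ∃ n, 0 < levySymbol (σ n) ξ := by
    have hint := integrable_two_sub_two_mul_cos_inner_of_min hν hκ hκ2 ξ
    exact ((((aecover_closedBall (x := (0 : V)) (tendsto_atTop_add_const_right _ 1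
      tendsto_natCast_atTop_atTop)).integral_tendsto_of_countably_generated
        hint).eventually_const_lt (hpos ξ hξ))).exists
  obtain ⟨n, hn⟩ := hK.elim_directed_cover (fun n ↦ {ξ | 0 < levySymbol (σ n) ξ})
    (fun n ↦ isOpen_lt continuous_const (hcont n)) (fun ξ hξ ↦ Set.mem_iUnion.2 (hexists ξ hξ))
    (Monotone.directed_le fun m n hmn ξ hξ ↦ lt_of_lt_of_le hξ (hmono ξ hmn))
  exact ⟨n + 1, hR n, hn⟩

/-- The Fourier transform of `v`, as a tempered distribution, is supported at the origin. -/
def SpectrumAtZero (v : V → ℂ) : Prop :=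
  ∀ f : 𝓢(V, ℂ), HasCompactSupport f → 0 ∉ tsupport f → ∀ x, ∫ z, v (x - z) * (𝓕⁻ f) z = 0

lemma spectrumAtZero_of_levyOp_eq_zero [SFinite ν] (hv : HasPowerGrowth κ v)
    (hv2 : ContDiff ℝ 2 v) (hκ : 0 ≤ κ) (hκ2 : κ ≤ 2)
    (hν : Integrable (fun y ↦ min (‖y‖ ^ 2) (‖y‖ ^ κ)) ν)
    (hpos : ∀ ξ, ξ ≠ 0 → 0 < levySymbol ν ξ) (h : ∀ x, levyOp ν v x = 0) : SpectrumAtZero v := by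
  intro f hf hf0 x
  obtain ⟨R, hR, hσpos⟩ := exists_forall_levySymbol_restrict_pos hν hκ hκ2 hf.isCompact
    fun ξ hξ ↦ hpos ξ (ne_of_mem_of_not_mem hξ hf0)
  set σ := ν.restrict (Metric.closedBall 0 R)
  set τ := ν.restrict (Metric.closedBall 0 R)ᶜ
  have hσ : Integrable (fun y ↦ ‖y‖ ^ 2) σ := integrable_sq_restrict_closedBall hν hκ hκ2 hR
  have hσR : ∀ᵐ y ∂σ, ‖y‖ ≤ R := (ae_restrict_mem Metric.isClosed_closedBall.measurableSet).mono
    fun y hy ↦ mem_closedBall_zero_iff.1 hy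
  have hτ : Integrable (fun y ↦ (1 + ‖y‖) ^ κ) τ :=
    integrable_one_add_norm_rpow_restrict_compl_closedBall hν hκ hκ2 hR
  have := isFiniteMeasure_of_integrable_one_add_norm_rpow hκ hτ
  -- The atom at the origin leaves the equation unchanged and makes `2 |τ'|` positive.
  let τ' := τ + Measure.dirac 0
  have hτ' : Integrable (fun y ↦ (1 + ‖y‖) ^ κ) τ' := hτ.add_measure (integrable_dirac (by simp))
  have hτ'pos : 0 < τ'.real Set.univ := by
    rw [measureReal_add_apply, measureReal_def (Measure.dirac _), measure_univ, ENNReal.toReal_one]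
    positivity
  have hmul : FourierMulEq (fun ξ ↦ 2 * τ'.real Set.univ + levySymbol σ ξ) v (symmConv τ' v) := by
    refine fourierMulEq_of_levyOp_eq hv (hasPowerGrowth_symmConv hv hκ hτ') hκ hv2 hσ hσR fun y ↦ ?_
    have hsplit := hv.levyOp_restrict_add_levyOp_restrict_compl hν hκ hκ2 hR hv2 y
    rw [h, ← hv.levyOp_add_dirac_zero hκ hτ, hv.levyOp_eq_symmConv_sub hκ hτ'] at hsplit
    push_cast
    linear_combination hsplit
  exact hmul.integral_mul_fourierInv_eq_zero hv hκ hτ'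
    (contDiff_const.add (contDiff_levySymbol hσ hσR))
    (fun ξ ↦ add_pos_of_pos_of_nonneg (by positivity) (levySymbol_nonneg ξ)) hf
    (fun ξ hξ ↦ lt_add_of_pos_right _ (hσpos ξ hξ)) x

end SpectrumAtZero

section Reproducing

lemma norm_comp_smul_le {V : Type*} [NormedAddCommGroup V] [NormedSpace ℝ V]
    {v : V → ℂ} {κ C r : ℝ} (hκ : 0 ≤ κ) (hC : ∀ x, ‖v x‖ ≤ C * (1 + ‖x‖) ^ κ)
    (hr : 1 ≤ r) (x : V) : ‖v (r • x)‖ ≤ C * r ^ κ * (1 + ‖x‖) ^ κ := by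
  have hC0 : 0 ≤ C := by simpa using (norm_nonneg _).trans (hC 0)
  have hr0 : 0 ≤ r := zero_le_one.trans hr
  refine (hC _).trans ?_
  rw [mul_assoc, ← Real.mul_rpow hr0 (by positivity), norm_smul, Real.norm_of_nonneg hr0]
  gcongr
  linarith

lemma exists_schwartz_eq_one_near_zero (V : Type*) [NormedAddCommGroup V] [InnerProductSpace ℝ V]
    [FiniteDimensional ℝ V] :
    ∃ χ : 𝓢(V, ℂ), HasCompactSupport χ ∧ ∀ᶠ ξ in 𝓝 (0 : V), χ ξ = 1 := by
  obtain ⟨b⟩ : Nonempty (ContDiffBump (0 : V)) := inferInstance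
  have hc : HasCompactSupport fun ξ ↦ (b ξ : ℂ) := b.hasCompactSupport.comp_left Complex.ofReal_zero
  have hs : ContDiff ℝ ∞ fun ξ ↦ (b ξ : ℂ) := Complex.ofRealCLM.contDiff.comp b.contDiff
  refine ⟨hc.toSchwartzMap hs, hc, ?_⟩
  filter_upwards [b.eventuallyEq_one] with ξ hξ
  rw [HasCompactSupport.toSchwartzMap_toFun, hξ, Pi.one_apply, Complex.ofReal_one]

variable {V : Type*} [NormedAddCommGroup V] [InnerProductSpace ℝ V] [FiniteDimensional ℝ V]
  [MeasurableSpace V] [BorelSpace V] {κ : ℝ} {v : V → ℂ}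

lemma fourierInv_comp_smul (f : V → ℂ) {r : ℝ} (hr : 0 < r) (z : V) :
    𝓕⁻ (fun ξ ↦ f (r • ξ)) z = ((r ^ Module.finrank ℝ V)⁻¹ : ℝ) • 𝓕⁻ f (r⁻¹ • z) := by
  have hscale := Measure.integral_comp_smul volume (fun ξ ↦ 𝐞 ⟪ξ, r⁻¹ • z⟫ • f ξ) r
  rw [abs_of_nonneg (by positivity)] at hscale
  rw [Real.fourierInv_eq, Real.fourierInv_eq, ← hscale]
  congr with ξ
  rw [real_inner_smul_left, real_inner_smul_right, mul_inv_cancel_left₀ hr.ne']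

lemma integral_mul_fourierInv_comp_smul (f : V → ℂ) {r : ℝ} (hr : 0 < r) (x : V) :
    ∫ z, v (x - z) * 𝓕⁻ (fun ξ ↦ f (r • ξ)) z = ∫ z, v (x - r • z) * 𝓕⁻ f z := by
  have hscale := Measure.integral_comp_smul volume (fun z ↦ v (x - r • z) * 𝓕⁻ f z) r⁻¹
  simp only [smul_inv_smul₀ hr.ne', inv_pow, inv_inv] at hscale
  rw [abs_of_nonneg (by positivity)] at hscale
  simp_rw [fourierInv_comp_smul f hr, mul_smul_comm]
  rw [integral_smul, hscale, inv_smul_smul₀ (by positivity)]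

lemma integral_fourierInv_schwartz (f : 𝓢(V, ℂ)) : ∫ z, (𝓕⁻ f) z = f 0 := by
  have h0 : 𝓕 (𝓕⁻ f : 𝓢(V, ℂ)) (0 : V) = f 0 := by rw [FourierTransform.fourier_fourierInv_eq f]
  rw [← h0, SchwartzMap.fourier_coe, Real.fourier_eq]
  simp

lemma HasPowerGrowth.tendsto_integral_sub_smul_mul (hv : HasPowerGrowth κ v) (hκ : 0 ≤ κ)
    (hvc : Continuous v) (ψ : 𝓢(V, ℂ)) (x : V) :
    Tendsto (fun r : ℝ ↦ ∫ z, v (x - r • z) * ψ z) (𝓝[>] 0) (𝓝 (v x * ∫ z, ψ z)) := by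
  obtain ⟨C, hC0, hC⟩ := hv.exists_nonneg_bound
  have hψ := ψ.continuous
  rw [← integral_const_mul]
  refine tendsto_integral_filter_of_dominated_convergence
    (fun z ↦ C * (1 + ‖x‖) ^ κ * ((1 + ‖z‖) ^ κ * ‖ψ z‖))
    (Eventually.of_forall fun r ↦ Continuous.aestronglyMeasurable (by fun_prop)) ?_
    ((integrable_rpow_mul_norm_schwartz ψ κ).const_mul _) (ae_of_all _ fun z ↦ ?_)
  · filter_upwards [Ioc_mem_nhdsGT zero_lt_one] with r hr
    refine ae_of_all _ fun z ↦ (norm_comp_sub_mul_le hκ hC x (r • z) _).trans ?_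
    gcongr
    rw [norm_smul, Real.norm_of_nonneg hr.1.le]
    exact mul_le_of_le_one_left (norm_nonneg z) hr.2
  · have : Continuous fun r : ℝ ↦ v (x - r • z) * ψ z := by fun_prop
    simpa only [zero_smul, sub_zero] using (this.tendsto 0).mono_left nhdsWithin_le_nhds

lemma SpectrumAtZero.integral_sub_smul_mul_fourierInv_eq (h : SpectrumAtZero v)
    (hv : HasPowerGrowth κ v) (hκ : 0 ≤ κ) {χ : 𝓢(V, ℂ)} (hχ : HasCompactSupport χ)
    (hχ1 : ∀ᶠ ξ in 𝓝 0, χ ξ = 1) {r s : ℝ} (hr : 0 < r) (hs : 0 < s) (x : V) :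
    ∫ z, v (x - r • z) * (𝓕⁻ χ) z = ∫ z, v (x - s • z) * (𝓕⁻ χ) z := by
  have hsupp {r : ℝ} (hr : 0 < r) : HasCompactSupport fun ξ ↦ χ (r • ξ) :=
    hχ.comp_homeomorph (Homeomorph.smulOfNeZero r hr.ne')
  have hone (r : ℝ) : ∀ᶠ ξ in 𝓝 (0 : V), χ (r • ξ) = 1 :=
    ((continuous_const_smul r).tendsto' 0 0 (smul_zero r)).eventually hχ1
  let f := (hsupp hr).toSchwartzMap ((χ.smooth ⊤).comp (contDiff_const_smul r))
  let g := (hsupp hs).toSchwartzMap ((χ.smooth ⊤).comp (contDiff_const_smul s))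
  have hfg : (0 : V) ∉ tsupport (f - g) := by
    rw [notMem_tsupport_iff_eventuallyEq]
    filter_upwards [hone r, hone s] with ξ hξr hξs
    exact sub_eq_zero.2 (hξr.trans hξs.symm)
  have hzero := h (f - g) ((hsupp hr).sub (hsupp hs)) hfg x
  have hsub : 𝓕⁻ (f - g) = 𝓕⁻ f - 𝓕⁻ g := map_sub (FourierTransform.fourierInvCLM ℂ 𝓢(V, ℂ)) f g
  simp_rw [hsub, sub_apply, mul_sub] at hzero
  rw [integral_sub (hv.integrable_sub_mul_schwartz hκ _ x) (hv.integrable_sub_mul_schwartz hκ _ x),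
    sub_eq_zero] at hzero
  simp only [SchwartzMap.fourierInv_coe] at hzero ⊢
  rwa [← integral_mul_fourierInv_comp_smul χ hr, ← integral_mul_fourierInv_comp_smul χ hs]

lemma SpectrumAtZero.exists_eq_integral_sub_smul_mul (h : SpectrumAtZero v)
    (hv : HasPowerGrowth κ v) (hκ : 0 ≤ κ) (hvc : Continuous v) :
    ∃ ψ : 𝓢(V, ℂ), ∀ r : ℝ, 0 < r → ∀ x, v x = ∫ z, v (x - r • z) * ψ z := by
  obtain ⟨χ, hχ, hχ1⟩ := exists_schwartz_eq_one_near_zero V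
  refine ⟨𝓕⁻ χ, fun r hr x ↦ ?_⟩
  have hlim := hv.tendsto_integral_sub_smul_mul hκ hvc (𝓕⁻ χ) x
  rw [integral_fourierInv_schwartz, hχ1.self_of_nhds, mul_one] at hlim
  refine tendsto_nhds_unique hlim (tendsto_const_nhds.congr' ?_)
  filter_upwards [self_mem_nhdsWithin] with s hs
  exact h.integral_sub_smul_mul_fourierInv_eq hv hκ hχ hχ1 hr hs x

lemma secondDiff_eq_integral_sub_mul_secondDiff {φ : V → ℂ}
    (hi : ∀ x, Integrable fun z ↦ v (x - z) * φ z) (h : ∀ x, v x = ∫ z, v (x - z) * φ z) (y x : V) :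
    secondDiff v y x = ∫ z, v (x - z) * secondDiff φ y z := by
  rw [integral_sub_mul_secondDiff hi]
  simp only [secondDiff, ← add_sub_right_comm, sub_right_comm _ _ y, add_mul, sub_mul, mul_assoc]
  have hadd : Integrable fun z ↦ v (x + y - z) * φ z + v (x - y - z) * φ z := (hi _).add (hi _)
  rw [integral_sub hadd ((hi x).const_mul 2), integral_add (hi _) (hi _),
    integral_const_mul, ← h, ← h, ← h]

lemma exists_norm_secondDiff_le_of_eq_integral_sub_mul (ψ : 𝓢(V, ℂ)) (hκ : 0 ≤ κ) :
    ∃ B, ∀ (v : V → ℂ) (C : ℝ), Measurable v → (∀ x, ‖v x‖ ≤ C * (1 + ‖x‖) ^ κ) →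
      (∀ x, v x = ∫ z, v (x - z) * ψ z) → ∀ y x, ‖y‖ ≤ 1 →
      ‖secondDiff v y x‖ ≤ B * C * (1 + ‖x‖) ^ κ * ‖y‖ ^ 2 := by
  obtain ⟨k, hk⟩ := exists_integrable_rpow_mul_inv_pow V κ
  obtain ⟨B, -, hB⟩ := exists_norm_iteratedFDeriv_schwartz_le ψ k 2
  refine ⟨B * (1 + 1) ^ k * ∫ z : V, (1 + ‖z‖) ^ κ * ((1 + ‖z‖) ^ k)⁻¹,
    fun v C hvm hC hv y x hy ↦ ?_⟩
  rw [secondDiff_eq_integral_sub_mul_secondDiff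
    (HasPowerGrowth.integrable_sub_mul_schwartz ⟨hvm, C, hC⟩ hκ ψ) hv]
  refine (norm_integral_le_of_norm_le ((hk.const_mul _).const_mul _) (ae_of_all _ fun z ↦
    norm_sub_mul_secondDiff_le hκ hC (ψ.smooth 2) hB hy x z)).trans_eq ?_
  rw [integral_const_mul, integral_const_mul]
  ring

/-- Averaging at scale `r` makes second differences `O(r ^ (κ - 2))`. -/
lemma secondDiff_eq_zero_of_eq_integral_sub_smul_mul (hv : HasPowerGrowth κ v) (hκ : 0 ≤ κ)
    (hκ2 : κ < 2) {ψ : 𝓢(V, ℂ)} (hψ : ∀ r : ℝ, 0 < r → ∀ x, v x = ∫ z, v (x - r • z) * ψ z)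
    (y x : V) : secondDiff v y x = 0 := by
  obtain ⟨C, hC0, hC⟩ := hv.exists_nonneg_bound
  obtain ⟨B, hB⟩ := exists_norm_secondDiff_le_of_eq_integral_sub_mul ψ hκ
  have hbound (r : ℝ) (hr : max 1 ‖y‖ ≤ r) :
      ‖secondDiff v y x‖ ≤ |B| * C * (1 + ‖x‖) ^ κ * ‖y‖ ^ 2 * r ^ (-(2 - κ)) := by
    have hr1 : 1 ≤ r := (le_max_left _ _).trans hr
    have hr0 : 0 < r := one_pos.trans_le hr1
    have hnorm (z : V) : ‖r⁻¹ • z‖ = r⁻¹ * ‖z‖ := by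
      rw [norm_smul, Real.norm_of_nonneg (inv_nonneg.2 hr0.le)]
    have hy : ‖r⁻¹ • y‖ ≤ 1 := by
      rw [hnorm, inv_mul_le_one₀ hr0]
      exact (le_max_right _ _).trans hr
    have hscale : secondDiff v y x = secondDiff (fun x ↦ v (r • x)) (r⁻¹ • y) (r⁻¹ • x) := by
      simp only [secondDiff, smul_add, smul_sub, smul_inv_smul₀ hr0.ne']
    calc ‖secondDiff v y x‖
        ≤ B * (C * r ^ κ) * (1 + ‖r⁻¹ • x‖) ^ κ * ‖r⁻¹ • y‖ ^ 2 := by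
          rw [hscale]
          refine hB (fun x ↦ v (r • x)) _ (hv.measurable.comp (measurable_const_smul r))
            (norm_comp_smul_le hκ hC hr1) (fun x ↦ ?_) _ _ hy
          simpa only [smul_sub] using hψ r hr0 (r • x)
      _ ≤ |B| * (C * r ^ κ) * (1 + ‖x‖) ^ κ * (r⁻¹ * ‖y‖) ^ 2 := by
          rw [hnorm, hnorm]
          gcongr
          · exact le_abs_self B
          · exact mul_le_of_le_one_left (norm_nonneg x) (inv_le_one_of_one_le₀ hr1)
      _ = _ := by
          rw [neg_sub, Real.rpow_sub hr0, Real.rpow_two]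
          field_simp
  have hlim := (tendsto_rpow_neg_atTop (sub_pos.2 hκ2)).const_mul
    (|B| * C * (1 + ‖x‖) ^ κ * ‖y‖ ^ 2)
  rw [mul_zero] at hlim
  exact norm_le_zero_iff.1 (ge_of_tendsto hlim ((eventually_ge_atTop _).mono hbound))

end Reproducing

section Liouville

variable {V : Type*} [NormedAddCommGroup V] [InnerProductSpace ℝ V] {κ : ℝ}

lemma eq_zero_of_abs_inner_add_le {ϖ : V} {c K : ℝ} (hκ : κ < 1)
    (h : ∀ x, |⟪ϖ, x⟫ + c| ≤ K * (1 + ‖x‖ ^ κ)) : ϖ = 0 := by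
  have hlim : Tendsto (fun t : ℝ ↦ (K - c) * t⁻¹ + K * ‖ϖ‖ ^ κ * t ^ (-(1 - κ))) atTop (𝓝 0) := by
    simpa using (tendsto_inv_atTop_zero.const_mul (K - c)).add
      ((tendsto_rpow_neg_atTop (sub_pos.2 hκ)).const_mul (K * ‖ϖ‖ ^ κ))
  have hle : ‖ϖ‖ ^ 2 ≤ 0 := by
    refine ge_of_tendsto hlim ?_
    filter_upwards [eventually_gt_atTop 0] with t ht
    have h1 := (le_abs_self _).trans (h (t • ϖ))
    rw [inner_smul_right, real_inner_self_eq_norm_sq, norm_smul, Real.norm_of_nonneg ht.le,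
      Real.mul_rpow ht.le (norm_nonneg _)] at h1
    rw [neg_sub, Real.rpow_sub_one ht.ne']
    field_simp
    linarith
  exact norm_eq_zero.1 (pow_eq_zero_iff two_ne_zero |>.1 (hle.antisymm (sq_nonneg _)))

variable [FiniteDimensional ℝ V]

/-- Vanishing second differences are Jensen's equation `u ((a + b) / 2) = (u a + u b) / 2`. -/
lemma exists_eq_inner_add_of_secondDiff_eq_zero {u : V → ℝ} (hu : Continuous u)
    (h : ∀ y x, secondDiff u y x = 0) : ∃ (ϖ : V) (c : ℝ), ∀ x, u x = ⟪ϖ, x⟫ + c := by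
  have hjensen (a b : V) : u a + u b = 2 * u ((2 : ℝ)⁻¹ • (a + b)) := by
    have hab := h ((2 : ℝ)⁻¹ • (a - b)) ((2 : ℝ)⁻¹ • (a + b))
    rw [secondDiff, sub_eq_zero] at hab
    convert hab using 3 <;> module
  have hadd (a b : V) : u (a + b) - u 0 = u a - u 0 + (u b - u 0) := by
    have h0 := hjensen (a + b) 0
    rw [add_zero, ← hjensen a b] at h0
    linarith
  let L := (AddMonoidHom.mk' (fun x ↦ u x - u 0) hadd).toRealLinearMap (hu.sub continuous_const)
  refine ⟨(InnerProductSpace.toDual ℝ V).symm L, u 0, fun x ↦ ?_⟩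
  rw [InnerProductSpace.toDual_symm_apply]
  exact (sub_add_cancel (u x) (u 0)).symm

end Liouville

section Complexification

variable {V : Type*} [NormedAddCommGroup V]

lemma secondDiff_ofReal (u : V → ℝ) (y x : V) :
    secondDiff (fun x ↦ (u x : ℂ)) y x = ((secondDiff u y x : ℝ) : ℂ) := by
  simp only [secondDiff]
  push_cast
  rfl

variable [MeasurableSpace V]

lemma levyOp_ofReal (ν : Measure V) (u : V → ℝ) (x : V) :
    levyOp ν (fun x ↦ (u x : ℂ)) x = ((levyOp ν u x : ℝ) : ℂ) := by
  simp only [levyOp, secondDiff_ofReal]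
  exact integral_ofReal

lemma hasPowerGrowth_ofReal {u : V → ℝ} {K κ : ℝ} (hu : Measurable u) (hκ : 0 ≤ κ)
    (h : ∀ x, |u x| ≤ K * (1 + ‖x‖ ^ κ)) : HasPowerGrowth κ fun x ↦ (u x : ℂ) := by
  have hK : 0 ≤ K := nonneg_of_mul_nonneg_left ((abs_nonneg _).trans (h 0)) (by positivity)
  refine ⟨Complex.measurable_ofReal.comp hu, K * 2, fun x ↦ ?_⟩
  rw [Complex.norm_real, Real.norm_eq_abs, mul_assoc, two_mul]
  refine (h x).trans ?_
  gcongr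
  · exact Real.one_le_rpow (le_add_of_nonneg_right (norm_nonneg x)) hκ
  · exact le_add_of_nonneg_left zero_le_one

end Complexification

theorem affine_of_harmonic_of_subcritical_growth_general
    {V : Type*} [NormedAddCommGroup V] [InnerProductSpace ℝ V] [FiniteDimensional ℝ V]
    [MeasurableSpace V] [BorelSpace V] (ν : Measure V) [SFinite ν]
    (K κ : ℝ) (hκ0 : 0 ≤ κ) (hκ : κ < 2)
    (hν : Integrable (fun y ↦ min (‖y‖ ^ 2) (‖y‖ ^ κ)) ν)
    (hpos : ∀ ξ, ξ ≠ 0 → 0 < levySymbol ν ξ)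
    (u : V → ℝ) (hu : ContDiff ℝ 2 u) (heq : ∀ x, levyOp ν u x = 0)
    (hgrowth : ∀ x, |u x| ≤ K * (1 + ‖x‖ ^ κ)) :
    ∃ (ϖ : V) (c : ℝ), (∀ x, u x = ⟪ϖ, x⟫ + c) ∧ (κ < 1 → ϖ = 0) := by
  have hv := hasPowerGrowth_ofReal hu.continuous.measurable hκ0 hgrowth
  have hv2 : ContDiff ℝ 2 fun x ↦ (u x : ℂ) := Complex.ofRealCLM.contDiff.comp hu
  have hspec : SpectrumAtZero fun x ↦ (u x : ℂ) :=
    spectrumAtZero_of_levyOp_eq_zero hv hv2 hκ0 hκ.le hν hpos fun x ↦ by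
      rw [levyOp_ofReal, heq, Complex.ofReal_zero]
  obtain ⟨ψ, hψ⟩ := hspec.exists_eq_integral_sub_smul_mul hv hκ0 hv2.continuous
  obtain ⟨ϖ, c, hϖ⟩ := exists_eq_inner_add_of_secondDiff_eq_zero hu.continuous fun y x ↦ by
    have := secondDiff_eq_zero_of_eq_integral_sub_smul_mul hv hκ0 hκ hψ y x
    rwa [secondDiff_ofReal, Complex.ofReal_eq_zero] at this
  exact ⟨ϖ, c, hϖ, fun hκ1 ↦ eq_zero_of_abs_inner_add_le hκ1 fun x ↦ hϖ x ▸ hgrowth x⟩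

section StableLevyMeasure

lemma exists_mem_Ioo_of_ae {a b : ℝ} (hab : a < b) {p : ℝ → Prop} (h : ∀ᵐ r, p r) :
    ∃ r ∈ Set.Ioo a b, p r :=
  (frequently_ae_mem_iff.2 (by simpa using hab)).and_eventually h |>.exists

lemma eq_zero_of_ae_cos_eq_one {a : ℝ} (h : ∀ᵐ r : ℝ, r ≠ 0 → Real.cos (r * a) = 1) : a = 0 := by
  by_contra ha
  have hpos : 0 < |a| := abs_pos.2 ha
  obtain ⟨r, ⟨hr0, hr⟩, hcos⟩ := exists_mem_Ioo_of_ae (div_pos Real.two_pi_pos hpos) h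
  have habs : |r * a| < 2 * Real.pi := by
    rwa [abs_mul, abs_of_pos hr0, ← lt_div_iff₀ hpos]
  have hra := (Real.cos_eq_one_iff_of_lt_of_lt (abs_lt.1 habs).1 (abs_lt.1 habs).2).1
    (hcos hr0.ne')
  exact (mul_ne_zero hr0.ne' ha) hra

lemma integrableOn_Ioi_inv_rpow_mul_min {α κ : ℝ} (hα : α < 2) (hκ : κ < α) :
    IntegrableOn (fun r : ℝ ↦ (r ^ (1 + α))⁻¹ * min (r ^ 2) (r ^ κ)) (Set.Ioi 0) := by
  have hm : Measurable fun r : ℝ ↦ (r ^ (1 + α))⁻¹ * min (r ^ 2) (r ^ κ) := by fun_prop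
  have hle (β : ℝ) {r : ℝ} (hr : 0 < r) (h : min (r ^ 2) (r ^ κ) ≤ r ^ β) :
      ‖(r ^ (1 + α))⁻¹ * min (r ^ 2) (r ^ κ)‖ ≤ r ^ (β - (1 + α)) := by
    rw [Real.norm_of_nonneg (by positivity), Real.rpow_sub hr, div_eq_inv_mul]
    gcongr
  rw [← Set.Ioc_union_Ioi_eq_Ioi zero_le_one]
  refine IntegrableOn.union ?_ ?_
  · have hi := (intervalIntegrable_iff_integrableOn_Ioc_of_le zero_le_one).1
      (intervalIntegral.intervalIntegrable_rpow' (a := 0) (b := 1) (r := 2 - (1 + α)) (by linarith))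
    refine hi.mono' hm.aestronglyMeasurable ?_
    filter_upwards [ae_restrict_mem measurableSet_Ioc] with r hr
    exact hle 2 hr.1 ((min_le_left _ _).trans_eq (Real.rpow_two r).symm)
  · refine (integrableOn_Ioi_rpow_of_lt (a := κ - (1 + α)) (by linarith) one_pos).mono'
      hm.aestronglyMeasurable ?_
    filter_upwards [ae_restrict_mem measurableSet_Ioi] with r hr
    exact hle κ (one_pos.trans hr) (min_le_right _ _)

lemma measurable_levyDensity {X : Type*} [MeasurableSpace X] {s : ℝ} :
    Measurable fun p : X × ℝ ↦ ENNReal.ofReal (|p.2| ^ (1 + 2 * s))⁻¹ := by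
  fun_prop

variable {V : Type*} [NormedAddCommGroup V] [InnerProductSpace ℝ V] [MeasurableSpace V]
  {s : ℝ} {μ : Measure (Metric.sphere (0 : V) 1)}

/-- The `2s`-stable Lévy measure with spectral measure `μ`: the image under `(ϑ, r) ↦ r ϑ` of
`dμ(ϑ) dr / |r| ^ (1 + 2s)`. -/
noncomputable def levyMeasure (s : ℝ) (μ : Measure (Metric.sphere (0 : V) 1)) : Measure V :=
  ((μ.prod (volume : Measure ℝ)).withDensity
    fun p ↦ ENNReal.ofReal (|p.2| ^ (1 + 2 * s))⁻¹).map fun p ↦ p.2 • (p.1 : V)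

instance [SFinite μ] : SFinite (levyMeasure s μ) := by
  unfold levyMeasure
  infer_instance

lemma not_ae_inner_eq_zero_of_forall_le_integral {a c : ℝ} (ha : a ≠ 0) (hc : 0 < c)
    (h : ∀ ν : Metric.sphere (0 : V) 1,
      c ≤ ∫ ϑ : Metric.sphere (0 : V) 1, |⟪(ν : V), (ϑ : V)⟫| ^ a ∂μ) {ξ : V} (hξ : ξ ≠ 0) :
    ¬ ∀ᵐ ϑ : Metric.sphere (0 : V) 1 ∂μ, ⟪(ϑ : V), ξ⟫ = 0 := by
  intro h0
  refine hc.not_ge ((h ⟨‖ξ‖⁻¹ • ξ, by simp [norm_smul, hξ]⟩).trans_eq ?_)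
  refine integral_eq_zero_of_ae ?_
  filter_upwards [h0] with ϑ hϑ
  rw [real_inner_smul_left, real_inner_comm, hϑ, mul_zero, abs_zero, Real.zero_rpow ha,
    Pi.zero_apply]

variable [FiniteDimensional ℝ V] [BorelSpace V]

lemma measurable_snd_smul_fst :
    Measurable fun p : Metric.sphere (0 : V) 1 × ℝ ↦ p.2 • (p.1 : V) := by
  fun_prop

lemma integral_levyMeasure {F : Type*} [NormedAddCommGroup F] [NormedSpace ℝ F] {f : V → F}
    (hf : AEStronglyMeasurable f (levyMeasure s μ)) :
    ∫ y, f y ∂levyMeasure s μ = ∫ p : Metric.sphere (0 : V) 1 × ℝ,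
      (|p.2| ^ (1 + 2 * s))⁻¹ • f (p.2 • (p.1 : V)) ∂(μ.prod volume) := by
  rw [levyMeasure, integral_map measurable_snd_smul_fst.aemeasurable hf,
    integral_withDensity_eq_integral_toReal_smul measurable_levyDensity
      (ae_of_all _ fun _ ↦ ENNReal.ofReal_lt_top)]
  refine integral_congr_ae (ae_of_all _ fun p ↦ ?_)
  dsimp only
  rw [ENNReal.toReal_ofReal (by positivity)]

lemma opI_eq_levyOp {n : ℕ} {μ : Measure (Metric.sphere (0 : EuclideanSpace ℝ (Fin n)) 1)}
    {u : EuclideanSpace ℝ (Fin n) → ℝ} (hu : Continuous u) :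
    opI n s μ u = levyOp (levyMeasure s μ) u := by
  ext x
  have hc : Continuous fun y ↦ secondDiff u y x := by
    unfold secondDiff
    fun_prop
  rw [levyOp, integral_levyMeasure hc.aestronglyMeasurable]
  simp only [opI, secondDiff, smul_eq_mul, div_eq_inv_mul]

lemma integrable_comp_norm_levyMeasure [IsFiniteMeasure μ] {g : ℝ → ℝ} (hgm : Measurable g)
    (hg : IntegrableOn (fun r ↦ (r ^ (1 + 2 * s))⁻¹ * g r) (Set.Ioi 0)) :
    Integrable (fun y ↦ g ‖y‖) (levyMeasure s μ) := by
  have hm : Measurable fun y : V ↦ g ‖y‖ := hgm.comp measurable_norm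
  rw [levyMeasure, integrable_map_measure hm.aestronglyMeasurable
      measurable_snd_smul_fst.aemeasurable,
    integrable_withDensity_iff_integrable_smul' measurable_levyDensity
      (ae_of_all _ fun _ ↦ ENNReal.ofReal_lt_top)]
  have hline : Integrable fun r : ℝ ↦ (|r| ^ (1 + 2 * s))⁻¹ * g |r| :=
    (integrable_fun_norm_addHaar (E := ℝ) volume
      (f := fun r ↦ (r ^ (1 + 2 * s))⁻¹ * g r)).2 (by simpa using hg)
  refine (hline.comp_snd μ).congr (ae_of_all _ fun p ↦ ?_)
  dsimp only [Function.comp]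
  rw [ENNReal.toReal_ofReal (by positivity), norm_smul, norm_eq_of_mem_sphere, mul_one,
    Real.norm_eq_abs, smul_eq_mul]

lemma integrable_min_levyMeasure [IsFiniteMeasure μ] (hs : s < 1) {κ : ℝ} (hκ : κ < 2 * s) :
    Integrable (fun y ↦ min (‖y‖ ^ 2) (‖y‖ ^ κ)) (levyMeasure s μ) :=
  integrable_comp_norm_levyMeasure (g := fun r ↦ min (r ^ 2) (r ^ κ)) (by fun_prop)
    (integrableOn_Ioi_inv_rpow_mul_min (by linarith) hκ)

lemma ae_ae_of_ae_levyMeasure [SFinite μ] {p : V → Prop} (hp : MeasurableSet {y | p y})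
    (h : ∀ᵐ y ∂levyMeasure s μ, p y) :
    ∀ᵐ ϑ : Metric.sphere (0 : V) 1 ∂μ, ∀ᵐ r : ℝ, r ≠ 0 → p (r • (ϑ : V)) := by
  rw [levyMeasure, ae_map_iff measurable_snd_smul_fst.aemeasurable hp,
    ae_withDensity_iff measurable_levyDensity] at h
  filter_upwards [Measure.ae_ae_of_ae_prod h] with ϑ hϑ
  filter_upwards [hϑ] with r hr hr0
  refine hr ?_
  have : 0 < (|r| ^ (1 + 2 * s))⁻¹ := by positivity
  simpa using this

lemma levySymbol_levyMeasure_pos [IsFiniteMeasure μ] (hs0 : 0 < s) (hs1 : s < 1) {ξ : V}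
    (hξ : ¬ ∀ᵐ ϑ : Metric.sphere (0 : V) 1 ∂μ, ⟪(ϑ : V), ξ⟫ = 0) :
    0 < levySymbol (levyMeasure s μ) ξ := by
  refine (levySymbol_nonneg ξ).lt_of_ne' fun h0 ↦ hξ ?_
  have hint := integrable_two_sub_two_mul_cos_inner_of_min
    (integrable_min_levyMeasure (μ := μ) hs1 (by positivity : 0 < 2 * s)) le_rfl zero_le_two ξ
  rw [levySymbol, integral_eq_zero_iff_of_nonneg (fun _ ↦ two_sub_two_mul_cos_nonneg _) hint] at h0
  have hae : ∀ᵐ y ∂levyMeasure s μ, Real.cos (2 * Real.pi * ⟪y, ξ⟫) = 1 := by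
    filter_upwards [h0] with y hy
    rw [Pi.zero_apply] at hy
    linarith
  filter_upwards [ae_ae_of_ae_levyMeasure (measurableSet_eq_fun (by fun_prop) (by fun_prop)) hae]
    with ϑ hϑ
  have hprod : 2 * Real.pi * ⟪(ϑ : V), ξ⟫ = 0 := eq_zero_of_ae_cos_eq_one <| by
    simpa only [real_inner_smul_left, mul_left_comm] using hϑ
  exact (mul_eq_zero.1 hprod).resolve_left Real.two_pi_pos.ne'

end StableLevyMeasure

end

/-- If `u ∈ C²(ℝⁿ)` solves `ℐu = 0` in `ℝⁿ` and `|u(x)| ≤ K(1+|x|^κ)` with `κ ∈ [0,2s)`,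
then `u` is affine, `u(x) = ϖ·x + c`; if moreover `κ < 1` then `ϖ = 0`, i.e. `u` is constant. -/
theorem affine_of_harmonic_of_subcritical_growth
    (n : ℕ) (hn : 1 ≤ n) (s : ℝ) (hs : s ∈ Set.Ioo (0 : ℝ) 1)
    (μ : Measure (Metric.sphere (0 : EuclideanSpace ℝ (Fin n)) 1)) [IsFiniteMeasure μ]
    (lam Λ : ℝ) (hlam : 0 < lam) (hΛ : 0 < Λ)
    (hnondeg : ∀ ν : Metric.sphere (0 : EuclideanSpace ℝ (Fin n)) 1,
      lam ≤ ∫ ϑ : Metric.sphere (0 : EuclideanSpace ℝ (Fin n)) 1,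
        |⟪(ν : EuclideanSpace ℝ (Fin n)), (ϑ : EuclideanSpace ℝ (Fin n))⟫| ^ (2 * s) ∂μ)
    (hμΛ : μ Set.univ ≤ ENNReal.ofReal Λ)
    (u : EuclideanSpace ℝ (Fin n) → ℝ) (hu : ContDiff ℝ 2 u)
    (heq : ∀ x, opI n s μ u x = 0)
    (K κ : ℝ) (hK : 0 ≤ K) (hκ0 : 0 ≤ κ) (hκ : κ < 2 * s)
    (hgrowth : ∀ x, |u x| ≤ K * (1 + ‖x‖ ^ κ)) :
    ∃ (ϖ : EuclideanSpace ℝ (Fin n)) (c : ℝ),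
      (∀ x, u x = ⟪ϖ, x⟫ + c) ∧ (κ < 1 → ϖ = 0) := by
  obtain ⟨hs0, hs1⟩ := hs
  rw [opI_eq_levyOp hu.continuous] at heq
  exact affine_of_harmonic_of_subcritical_growth_general (levyMeasure s μ) K κ hκ0 (by linarith)
    (integrable_min_levyMeasure hs1 hκ) (fun ξ hξ ↦ levySymbol_levyMeasure_pos hs0 hs1
      (not_ae_inner_eq_zero_of_forall_le_integral (by positivity) hlam hnondeg hξ)) u hu heq hgrowth
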